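/- arXiv:1904.03088 — 7 statements merged into one kernel-verified Lean document; each statement's English description precedes it below -/
import Mathlib

section
/- Let X be a complex Banach space and let Ω ⊆ ℂ be open. A function f : Ω → X is holomorphic (i.e. complex differentiable at every point of Ω) if and only if f is locally L¹-bounded and there exists a separating set W ⊆ X' such that x' ∘ f : Ω → ℂ is holomorphic for every x' ∈ W. -/
open MeasureTheory

lemma vw_annulus {a b t : ℝ} (ha : 0 < a) (hab : a ≤ b) (hbt : b < t) {h : ℂ → ℂ}
    (hh : DifferentiableOn ℂ h (Metric.ball 0 t)) {z : ℂ} (hz : ‖z‖ < a) :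
    ∫ w in {w : ℂ | ‖w‖ ∈ Set.Icc a b}, w / (w - z) * h w
      = ((Real.pi * (b ^ 2 - a ^ 2) : ℝ) : ℂ) * h z := by
  have hS : MeasurableSet {w : ℂ | ‖w‖ ∈ Set.Icc a b} := measurable_norm measurableSet_Icc
  set G : ℂ → ℂ := fun w => w / (w - z) * h w with hG
  have hGc : ContinuousOn G {w : ℂ | ‖w‖ ∈ Set.Icc a b} := by
    refine ContinuousOn.mul (ContinuousOn.div continuousOn_id (by fun_prop) ?_)
      (hh.continuousOn.mono ?_)
    · intro w hw h0
      have : w = z := sub_eq_zero.1 h0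
      rw [← this] at hz
      exact absurd hw.1 (not_le.2 hz)
    · intro w hw
      simpa using hw.2.trans_lt hbt
  rw [← integral_indicator hS, ← Complex.integral_comp_polarCoord_symm]
  have e1 : ∀ p : ℝ × ℝ, p ∈ polarCoord.target →
      p.1 • ({w : ℂ | ‖w‖ ∈ Set.Icc a b}.indicator G) (Complex.polarCoord.symm p)
      = (Set.Icc a b ×ˢ (Set.univ : Set ℝ)).indicator
        (fun p => p.1 • G (circleMap 0 p.1 p.2)) p := by
    intro p hp
    have hp1 : 0 < p.1 := hp.1
    have e : Complex.polarCoord.symm p = circleMap 0 p.1 p.2 := by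
      rw [Complex.polarCoord_symm_apply, circleMap, Complex.exp_mul_I]
      simp
    by_cases hm : p.1 ∈ Set.Icc a b
    · rw [Set.indicator_of_mem, Set.indicator_of_mem, e]
      · exact ⟨hm, trivial⟩
      · rwa [Set.mem_ofPred_eq, Complex.norm_polarCoord_symm, abs_of_pos hp1]
    · rw [Set.indicator_of_notMem, Set.indicator_of_notMem, smul_zero]
      · exact fun h => hm h.1
      · rwa [Set.mem_ofPred_eq, Complex.norm_polarCoord_symm, abs_of_pos hp1]
  rw [setIntegral_congr_fun polarCoord.open_target.measurableSet e1,
    setIntegral_indicator (measurableSet_Icc.prod MeasurableSet.univ)]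
  have e2 : polarCoord.target ∩ Set.Icc a b ×ˢ (Set.univ : Set ℝ)
      = Set.Icc a b ×ˢ Set.Ioo (-Real.pi) Real.pi := by
    ext p
    simp only [polarCoord_target, Set.mem_inter_iff, Set.mem_prod, Set.mem_univ, and_true,
      Set.mem_Ioi]
    constructor
    · rintro ⟨⟨_, h2⟩, h3⟩; exact ⟨h3, h2⟩
    · rintro ⟨h3, h2⟩; exact ⟨⟨ha.trans_le h3.1, h2⟩, h3⟩
  rw [e2, Measure.volume_eq_prod, setIntegral_prod]
  · have e3 : ∀ ρ ∈ Set.Icc a b, (∫ θ in Set.Ioo (-Real.pi) Real.pi,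
        ρ • G (circleMap 0 ρ θ)) = ρ • ((2 * Real.pi) • h z) := by
      intro ρ hρ
      have hρ0 : 0 < ρ := ha.trans_le hρ.1
      rw [integral_smul]
      congr 1
      have hd : DiffContOnCl ℂ h (Metric.ball 0 |ρ|) := by
        apply DifferentiableOn.diffContOnCl
        rw [closure_ball _ (abs_pos.2 hρ0.ne').ne', abs_of_pos hρ0]
        exact hh.mono (Metric.closedBall_subset_ball (hρ.2.trans_lt hbt))
      have := hd.circleAverage_smul_div (w := z) (by
        rw [abs_of_pos hρ0]; simpa using hz.trans_le hρ.1)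
      rw [← this, Real.circleAverage_def, smul_inv_smul₀ (by positivity)]
      have per : Function.Periodic (fun θ => G (circleMap 0 ρ θ)) (2 * Real.pi) :=
        fun x => by simp [periodic_circleMap 0 ρ x]
      have := per.intervalIntegral_add_eq 0 (-Real.pi)
      rw [show -Real.pi + 2 * Real.pi = Real.pi by ring, zero_add] at this
      rw [← integral_Ioc_eq_integral_Ioo, ← intervalIntegral.integral_of_le
        (by linarith [Real.pi_pos]), ← this]
      simp [hG]
    rw [setIntegral_congr_fun measurableSet_Icc e3, integral_Icc_eq_integral_Ioc,
      ← intervalIntegral.integral_of_le hab, intervalIntegral.integral_smul_const, integral_id]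
    simp only [Complex.real_smul]
    push_cast
    ring
  · refine IntegrableOn.mono_set (t := Set.Icc a b ×ˢ Set.Icc (-Real.pi) Real.pi) ?_
      (Set.prod_mono le_rfl Set.Ioo_subset_Icc_self)
    rw [← Measure.volume_eq_prod]
    refine ContinuousOn.integrableOn_compact (isCompact_Icc.prod isCompact_Icc) ?_
    refine continuousOn_fst.smul (hGc.comp ?_ ?_)
    · unfold circleMap; fun_prop
    · intro p hp
      simp only [Set.mem_ofPred_eq, norm_circleMap_zero]
      rw [abs_of_pos (ha.trans_le hp.1.1)]
      exact hp.1

lemma vw_sample {X : Type*} [NormedAddCommGroup X] (f : ℂ → X) (g : ℂ → ℝ) {K : Set ℂ}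
    (hK : IsCompact K) (hg : IntegrableOn g K)
    (hfg : ∀ᵐ ξ ∂(volume.restrict K), ‖f ξ‖ ≤ g ξ) {δ : ℝ} (hδ : 0 < δ) :
    ∃ (N : ℕ) (p : ℕ → ℂ) (c : ℕ → ℝ), (∀ i, 0 ≤ c i) ∧ (∀ i, p i ∈ K ∨ (c i = 0 ∧ p i = 0)) ∧
      (∑ i ∈ Finset.range N, c i * ‖f (p i)‖ ≤ ∫ w in K, g w) ∧
      ∀ H : ℂ → ℂ, IntegrableOn H K → ∀ η : ℝ,
        (∀ w ∈ K, ∀ w' ∈ K, dist w w' < δ → ‖H w - H w'‖ ≤ η) →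
        ‖(∫ w in K, H w) - ∑ i ∈ Finset.range N, (c i : ℂ) * H (p i)‖ ≤ η * volume.real K := by
  classical
  set e := TopologicalSpace.denseSeq ℂ
  have hcov : K ⊆ ⋃ i, Metric.ball (e i) (δ / 2) := by
    intro x _
    obtain ⟨i, hi⟩ := (TopologicalSpace.denseRange_denseSeq ℂ).exists_dist_lt x (half_pos hδ)
    exact Set.mem_iUnion.2 ⟨i, hi⟩
  obtain ⟨T, hT⟩ := hK.elim_finite_subcover _ (fun i => Metric.isOpen_ball) hcov
  set N := T.sup id + 1 with hN
  set Q : ℕ → Set ℂ := fun i => K ∩ disjointed (fun i => Metric.ball (e i) (δ / 2)) i with hQ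
  have hQm : ∀ i, MeasurableSet (Q i) := fun i =>
    hK.measurableSet.inter (MeasurableSet.disjointed (fun i => measurableSet_ball) i)
  have hQK : ∀ i, Q i ⊆ K := fun i => Set.inter_subset_left
  have hQd : Pairwise (Function.onFun Disjoint Q) := fun i j hij =>
    (disjoint_disjointed (fun i => Metric.ball (e i) (δ / 2)) hij).mono
      Set.inter_subset_right Set.inter_subset_right
  have hQdist : ∀ i, ∀ w ∈ Q i, ∀ w' ∈ Q i, dist w w' < δ := by
    intro i w hw w' hw'
    have h1 : w ∈ Metric.ball (e i) (δ / 2) :=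
      disjointed_le (fun i => Metric.ball (e i) (δ / 2)) i hw.2
    have h2 : w' ∈ Metric.ball (e i) (δ / 2) :=
      disjointed_le (fun i => Metric.ball (e i) (δ / 2)) i hw'.2
    have := dist_triangle_right w w' (e i)
    rw [Metric.mem_ball] at h1 h2
    linarith
  have hU : (⋃ i ∈ Finset.range N, Q i) = K := by
    apply Set.Subset.antisymm
    · exact Set.iUnion₂_subset fun i _ => hQK i
    · intro x hx
      have hex : ∃ i, i < N ∧ x ∈ Metric.ball (e i) (δ / 2) := by
        obtain ⟨i, hi, hxi⟩ := Set.mem_iUnion₂.1 (hT hx)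
        exact ⟨i, Nat.lt_succ_of_le (Finset.le_sup (f := id) hi), hxi⟩
      refine Set.mem_iUnion₂.2 ⟨Nat.find hex, Finset.mem_range.2 (Nat.find_spec hex).1, hx, ?_⟩
      rw [disjointed_apply]
      refine ⟨(Nat.find_spec hex).2, ?_⟩
      intro hm
      simp only [Finset.sup_set_eq_biUnion, Set.mem_iUnion, Finset.mem_Iio] at hm
      obtain ⟨j, hj, hxj⟩ := hm
      exact Nat.find_min hex hj ⟨hj.trans (Nat.find_spec hex).1, hxj⟩
  have hfin : ∀ i, volume (Q i) < ⊤ := fun i =>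
    (measure_mono (hQK i)).trans_lt hK.measure_lt_top
  have hsum : ∀ {E : Type} [NormedAddCommGroup E] [NormedSpace ℝ E] (H : ℂ → E), IntegrableOn H K →
      ∫ w in K, H w = ∑ i ∈ Finset.range N, ∫ w in Q i, H w := by
    intro E _ _ H hH
    rw [← integral_biUnion_finset _ (fun i _ => hQm i) (fun i _ j _ hij => hQd hij)
      (fun i _ => hH.mono_set (hQK i)), hU]
  have hpt : ∀ i, ∃ p : ℂ, (p ∈ Q i ∧ volume.real (Q i) * ‖f p‖ ≤ ∫ w in Q i, g w) ∨
      (volume.real (Q i) = 0 ∧ p = 0) := by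
    intro i
    by_cases h0 : volume.real (Q i) = 0
    · exact ⟨0, Or.inr ⟨h0, rfl⟩⟩
    have hpos : 0 < volume.real (Q i) := lt_of_le_of_ne measureReal_nonneg (Ne.symm h0)
    have : IsFiniteMeasure (volume.restrict (Q i)) := ⟨by simpa using hfin i⟩
    have hne : volume.restrict (Q i) ≠ 0 := by
      intro h
      apply h0
      rw [Measure.restrict_eq_zero] at h
      simp [Measure.real, h]
    have hae : ∀ᵐ ξ ∂(volume.restrict (Q i)), ξ ∈ Q i ∧ ‖f ξ‖ ≤ g ξ :=
      (ae_restrict_mem (hQm i)).and (ae_restrict_of_ae_restrict_of_subset (hQK i) hfg)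
    obtain ⟨x, hx, hxg⟩ := exists_notMem_null_le_average hne (hg.mono_set (hQK i))
      (ae_iff.1 hae)
    have hx' : x ∈ Q i ∧ ‖f x‖ ≤ g x := by simpa using hx
    refine ⟨x, Or.inl ⟨hx'.1, ?_⟩⟩
    rw [setAverage_eq, smul_eq_mul] at hxg
    calc volume.real (Q i) * ‖f x‖
        ≤ volume.real (Q i) * ((volume.real (Q i))⁻¹ * ∫ w in Q i, g w) := by
          gcongr; exact hx'.2.trans hxg
      _ = _ := by field_simp
  choose p hp using hpt
  refine ⟨N, p, fun i => volume.real (Q i), fun i => measureReal_nonneg, ?_, ?_, ?_⟩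
  · intro i
    rcases hp i with h | h
    · exact Or.inl (hQK i h.1)
    · exact Or.inr h
  · rw [hsum g hg]
    refine Finset.sum_le_sum fun i _ => ?_
    rcases hp i with h | h
    · exact h.2
    · have : volume (Q i) = 0 := by
        simpa [Measure.real, ENNReal.toReal_eq_zero_iff, (hfin i).ne] using h.1
      simp only [h.1, zero_mul]
      rw [setIntegral_measure_zero _ this]
  · intro H hH η hη
    have hKv : volume.real K = ∑ i ∈ Finset.range N, volume.real (Q i) := by
      have := hsum (fun _ => (1 : ℝ)) (by simpa using hK.measure_lt_top)
      simpa using this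
    rw [hsum H hH, ← Finset.sum_sub_distrib, hKv, Finset.mul_sum]
    refine (norm_sum_le _ _).trans (Finset.sum_le_sum fun i _ => ?_)
    rcases hp i with h | h
    · have : ((volume.real (Q i) : ℝ) : ℂ) * H (p i) = ∫ w in Q i, H (p i) := by
        simp
      rw [this, ← integral_sub (hH.mono_set (hQK i)) (integrableOn_const (hfin i).ne)]
      refine norm_setIntegral_le_of_norm_le_const (hfin i) fun w hw => ?_
      exact hη _ (hQK i hw) _ (hQK i h.1) (hQdist i w hw _ h.1)
    · have : volume (Q i) = 0 := by
        simpa [Measure.real, ENNReal.toReal_eq_zero_iff, (hfin i).ne] using h.1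
      simp only [h.1]
      rw [setIntegral_measure_zero _ this]
      simp

lemma vw_step {X : Type*} [NormedAddCommGroup X] [NormedSpace ℂ X] (f : ℂ → X) (g : ℂ → ℝ)
    {R : ℝ} (hg : IntegrableOn g (Metric.ball 0 R))
    (hfg : ∀ᵐ ξ ∂(volume.restrict (Metric.ball 0 R)), ‖f ξ‖ ≤ g ξ) {s t : ℝ} (hs : 0 < s)
    (hst : s < t) (htR : t ≤ R) :
    ∃ B : ℝ, 0 < B ∧ ∀ ε : ℝ, 0 < ε → ∃ (N : ℕ) (p : ℕ → ℂ) (a : ℕ → ℂ → ℂ),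
      (∀ i, p i ∈ Metric.ball (0 : ℂ) t) ∧
      (∀ i, DifferentiableOn ℂ (a i) (Metric.ball 0 s)) ∧
      (∀ z ∈ Metric.ball (0 : ℂ) s, ‖∑ i ∈ Finset.range N, a i z • f (p i)‖ ≤ B) ∧
      ∀ h : ℂ → ℂ, DifferentiableOn ℂ h (Metric.ball 0 t) → ∀ M : ℝ,
        (∀ w ∈ Metric.ball (0 : ℂ) t, ‖h w‖ ≤ M) → ∀ z ∈ Metric.ball (0 : ℂ) s,
        ‖h z - ∑ i ∈ Finset.range N, a i z • h (p i)‖ ≤ ε * M := by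
  obtain ⟨e, he⟩ : ∃ e, e = (t - s) / 3 := ⟨_, rfl⟩
  have he0 : 0 < e := by rw [he]; linarith
  set K : Set ℂ := {w : ℂ | ‖w‖ ∈ Set.Icc (s + e) (s + 2 * e)} with hKdef
  have hK : IsCompact K := by
    refine Metric.isCompact_of_isClosed_isBounded (isClosed_Icc.preimage continuous_norm) ?_
    refine Metric.isBounded_closedBall.subset (t := Metric.closedBall (0 : ℂ) (s + 2 * e)) ?_
    intro w hw
    simpa using hw.2
  have hKt : K ⊆ Metric.ball 0 t := fun w hw => by
    have := hw.2
    rw [mem_ball_zero_iff]; linarith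
  have hKR : K ⊆ Metric.ball 0 R := hKt.trans (Metric.ball_subset_ball htR)
  have ht : 0 < t := hs.trans hst
  set C : ℝ := t / (e / 2) with hC
  have hC0 : 0 < C := by positivity
  -- the kernel bound on a neighbourhood of the annulus
  have hker : ∀ z ∈ Metric.ball (0 : ℂ) s, ∀ w : ℂ, s + e / 2 ≤ ‖w‖ → ‖w‖ ≤ t →
      w - z ≠ 0 ∧ ‖w / (w - z)‖ ≤ C := by
    intro z hz w hw hwt
    rw [mem_ball_zero_iff] at hz
    have h1 : e / 2 ≤ ‖w - z‖ := by
      have := norm_sub_norm_le w z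
      linarith
    refine ⟨norm_pos_iff.1 (by linarith), ?_⟩
    rw [norm_div, hC]
    gcongr
  set A : ℝ := Real.pi * ((s + 2 * e) ^ 2 - (s + e) ^ 2) with hA
  have hA0 : 0 < A := by
    rw [hA]
    have : (s + 2 * e) ^ 2 - (s + e) ^ 2 = e * (2 * s + 3 * e) := by ring
    rw [this]
    have := Real.pi_pos
    positivity
  refine ⟨|C / A * ∫ w in K, g w| + 1, by positivity, fun ε hε => ?_⟩
  set V : ℝ := volume.real K with hV
  have hV0 : 0 ≤ V := measureReal_nonneg
  set L : ℝ := 2 * C / (e / 2) with hL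
  have hL0 : 0 < L := by positivity
  set δ : ℝ := min (e / 2) (ε * A / (L * (V + 1))) with hδ
  have hδ0 : 0 < δ := by
    rw [hδ]
    exact lt_min (by positivity) (by positivity)
  obtain ⟨N, p, c, hc, hp, hsum, hH⟩ := vw_sample f g hK (hg.mono_set hKR)
    (ae_restrict_of_ae_restrict_of_subset hKR hfg) hδ0
  refine ⟨N, p, fun i z => (c i : ℂ) * (p i / (p i - z)) / A, ?_, ?_, ?_, ?_⟩
  · intro i
    rcases hp i with h | h
    · exact hKt h
    · rw [h.2]; simpa using ht
  · intro i
    rcases hp i with h | h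
    · have hne : ∀ z ∈ Metric.ball (0 : ℂ) s, p i - z ≠ 0 := fun z hz =>
        (hker z hz (p i) (by linarith [h.1]) (by linarith [h.2])).1
      fun_prop (disch := assumption)
    · simp [h.1]
  · intro z hz
    refine le_trans ?_ ((le_abs_self _).trans (le_add_of_nonneg_right zero_le_one))
    calc ‖∑ i ∈ Finset.range N, ((c i : ℂ) * (p i / (p i - z)) / A) • f (p i)‖
        ≤ ∑ i ∈ Finset.range N, C / A * (c i * ‖f (p i)‖) := by
          refine (norm_sum_le _ _).trans (Finset.sum_le_sum fun i _ => ?_)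
          rcases hp i with h | h
          · have hk := (hker z hz (p i) (by linarith [h.1]) (by linarith [h.2])).2
            rw [norm_smul, norm_div, norm_mul, Complex.norm_real, Complex.norm_real,
              Real.norm_of_nonneg (hc i), Real.norm_of_nonneg hA0.le]
            have : c i * ‖p i / (p i - z)‖ / A * ‖f (p i)‖
              = ‖p i / (p i - z)‖ / A * (c i * ‖f (p i)‖) := by ring
            rw [this]
            have := hc i
            gcongr
          · simp [h.1]
      _ = C / A * ∑ i ∈ Finset.range N, (c i * ‖f (p i)‖) := by rw [Finset.mul_sum]
      _ ≤ _ := by gcongr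
  · intro h hd M hM z hz
    have hM0 : 0 ≤ M := (norm_nonneg _).trans (hM 0 (by simpa using ht))
    have hint := vw_annulus (a := s + e) (b := s + 2 * e) (t := t) (by positivity)
      (by linarith) (by linarith) hd (z := z)
      (by rw [mem_ball_zero_iff] at hz; linarith)
    set H : ℂ → ℂ := fun w => w / (w - z) * h w with hHdef
    have hHd : ∀ w ∈ K, DifferentiableOn ℂ H (Metric.ball w (e / 2)) ∧
        ∀ w' ∈ Metric.ball w (e / 2), ‖H w'‖ ≤ C * M := by
      intro w hw
      have hsub : ∀ w' ∈ Metric.ball w (e / 2), s + e / 2 ≤ ‖w'‖ ∧ ‖w'‖ < t := by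
        intro w' hw'
        rw [mem_ball_iff_norm] at hw'
        have h1 := norm_sub_norm_le w' w
        have h2 := norm_sub_norm_le w w'
        rw [norm_sub_rev] at h2
        have h3 := hw.1
        have h4 := hw.2
        constructor <;> linarith
      constructor
      · have hne : ∀ w' ∈ Metric.ball w (e / 2), w' - z ≠ 0 := fun w' hw' =>
          (hker z hz w' (hsub w' hw').1 (hsub w' hw').2.le).1
        have hd' : DifferentiableOn ℂ h (Metric.ball w (e / 2)) :=
          hd.mono fun w' hw' => by simpa using (hsub w' hw').2
        exact (differentiableOn_id.div (by fun_prop) hne).mul hd'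
      · intro w' hw'
        rw [hHdef]
        simp only [norm_mul]
        exact mul_le_mul (hker z hz w' (hsub w' hw').1 (hsub w' hw').2.le).2
          (hM w' (by simpa using (hsub w' hw').2)) (norm_nonneg _) hC0.le
    have hHc : ContinuousOn H K := fun w hw =>
      (((hHd w hw).1.differentiableAt (Metric.ball_mem_nhds w (by positivity))).continuousAt
        ).continuousWithinAt
    have key := hH H (hHc.integrableOn_compact hK) (L * M * δ) (by
      intro w hw w' hw' hdist
      have := Complex.dist_le_div_mul_dist_of_mapsTo_ball (f := H) (c := w') (z := w)
        (R₁ := e / 2) (R₂ := 2 * (C * M)) (hHd w' hw').1 (by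
          intro v hv
          rw [mem_closedBall_iff_norm]
          have h1 := (hHd w' hw').2 v hv
          have h2 := (hHd w' hw').2 w' (Metric.mem_ball_self (by positivity))
          have h3 := norm_sub_le (H v) (H w')
          linarith) (by
          rw [Metric.mem_ball]; exact hdist.trans_le (min_le_left _ _))
      rw [← dist_eq_norm]
      refine this.trans ?_
      have e1 : 2 * (C * M) / (e / 2) = L * M := by rw [hL]; ring
      rw [e1]
      gcongr)
    rw [hint] at key
    have hAc : (A : ℂ) ≠ 0 := by exact_mod_cast hA0.ne'
    have e2 : h z - ∑ i ∈ Finset.range N, ((c i : ℂ) * (p i / (p i - z)) / A) • h (p i)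
        = ((A : ℂ) * h z - ∑ i ∈ Finset.range N, (c i : ℂ) * H (p i)) / A := by
      rw [sub_div, mul_div_cancel_left₀ _ hAc, Finset.sum_div]
      congr 1
      refine Finset.sum_congr rfl fun i _ => ?_
      simp only [hHdef, smul_eq_mul]
      ring
    rw [e2, norm_div, Complex.norm_real, Real.norm_of_nonneg hA0.le, div_le_iff₀ hA0]
    refine key.trans ?_
    have h5 : δ * (L * (V + 1)) ≤ ε * A := by
      rw [← le_div_iff₀ (by positivity)]
      exact min_le_right _ _
    calc L * M * δ * V ≤ L * M * δ * (V + 1) := by gcongr; linarith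
      _ = M * (δ * (L * (V + 1))) := by ring
      _ ≤ M * (ε * A) := by gcongr
      _ = ε * M * A := by ring

/-- One approximation step. -/
noncomputable def vwA {V : Type*} [AddCommGroup V] [Module ℂ V] (N : ℕ) (p : ℕ → ℂ)
    (a : ℕ → ℂ → ℂ) (u : ℂ → V) : ℂ → V := fun z => ∑ i ∈ Finset.range N, a i z • u (p i)

/-- Composition of the remainder operators. -/
noncomputable def vwT {V : Type*} [AddCommGroup V] [Module ℂ V] (N : ℕ → ℕ) (p : ℕ → ℕ → ℂ)
    (a : ℕ → ℕ → ℂ → ℂ) : ℕ → (ℂ → V) → (ℂ → V)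
  | 0, u => u
  | n + 1, u => vwT N p a n (fun z => u z - vwA (N n) (p n) (a n) u z)

lemma vwT_sub {V : Type*} [AddCommGroup V] [Module ℂ V] (N : ℕ → ℕ) (p : ℕ → ℕ → ℂ)
    (a : ℕ → ℕ → ℂ → ℂ) (n : ℕ) : ∀ (u v : ℂ → V) (z : ℂ),
    vwT N p a n (fun z => u z - v z) z = vwT N p a n u z - vwT N p a n v z := by
  induction n with
  | zero => intro u v z; rfl
  | succ n ih =>
    intro u v z
    simp only [vwT]
    rw [← ih]
    congr 1
    funext w
    simp only [vwA, smul_sub, Finset.sum_sub_distrib]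
    abel

lemma vwT_comp {X : Type*} [NormedAddCommGroup X] [NormedSpace ℂ X] (x' : X →L[ℂ] ℂ)
    (N : ℕ → ℕ) (p : ℕ → ℕ → ℂ)
    (a : ℕ → ℕ → ℂ → ℂ) (n : ℕ) : ∀ (u : ℂ → X) (z : ℂ),
    x' (vwT N p a n u z) = vwT N p a n (fun z => x' (u z)) z := by
  induction n with
  | zero => intro u z; rfl
  | succ n ih =>
    intro u z
    simp only [vwT]
    rw [ih]
    congr 1
    funext w
    simp [vwA]

lemma vwT_diff {V : Type*} [NormedAddCommGroup V] [NormedSpace ℂ V] (N : ℕ → ℕ) (p : ℕ → ℕ → ℂ)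
    (a : ℕ → ℕ → ℂ → ℂ) (s : ℕ → ℝ) (hs : Monotone s)
    (ha : ∀ n i, DifferentiableOn ℂ (a n i) (Metric.ball 0 (s n))) (n : ℕ) : ∀ (u : ℂ → V),
    DifferentiableOn ℂ u (Metric.ball 0 (s n)) →
    DifferentiableOn ℂ (vwT N p a n u) (Metric.ball 0 (s 0)) := by
  induction n with
  | zero => intro u hu; exact hu
  | succ n ih =>
    intro u hu
    simp only [vwT]
    apply ih
    refine (hu.mono (Metric.ball_subset_ball (hs n.le_succ))).sub ?_
    unfold vwA
    exact DifferentiableOn.fun_sum fun i _ => (ha n i).smul_const _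

lemma vwT_bound (N : ℕ → ℕ) (p : ℕ → ℕ → ℂ)
    (a : ℕ → ℕ → ℂ → ℂ) (s : ℕ → ℝ) (hs : Monotone s) (ε : ℕ → ℝ)
    (ha : ∀ n i, DifferentiableOn ℂ (a n i) (Metric.ball 0 (s n)))
    (hR : ∀ n, ∀ h : ℂ → ℂ, DifferentiableOn ℂ h (Metric.ball 0 (s (n + 1))) → ∀ M : ℝ,
        (∀ w ∈ Metric.ball (0 : ℂ) (s (n + 1)), ‖h w‖ ≤ M) → ∀ z ∈ Metric.ball (0 : ℂ) (s n),
        ‖h z - vwA (N n) (p n) (a n) h z‖ ≤ ε n * M) (n : ℕ) : ∀ (u : ℂ → ℂ) (M : ℝ),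
    DifferentiableOn ℂ u (Metric.ball 0 (s n)) →
    (∀ w ∈ Metric.ball (0 : ℂ) (s n), ‖u w‖ ≤ M) →
    ∀ z ∈ Metric.ball (0 : ℂ) (s 0),
      ‖vwT N p a n u z‖ ≤ (∏ j ∈ Finset.range n, ε j) * M := by
  induction n with
  | zero => intro u M hu hM z hz; simpa [vwT] using hM z hz
  | succ n ih =>
    intro u M hu hM z hz
    simp only [vwT]
    rw [Finset.prod_range_succ, mul_assoc]
    refine ih _ _ ?_ (hR n u hu M hM) z hz
    refine (hu.mono (Metric.ball_subset_ball (hs n.le_succ))).sub ?_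
    unfold vwA
    exact DifferentiableOn.fun_sum fun i _ => (ha n i).smul_const _

lemma vwT_bound' {X : Type*} [NormedAddCommGroup X] [NormedSpace ℂ X]
    (N : ℕ → ℕ) (p : ℕ → ℕ → ℂ)
    (a : ℕ → ℕ → ℂ → ℂ) (s : ℕ → ℝ) (hs : Monotone s) (ε : ℕ → ℝ)
    (ha : ∀ n i, DifferentiableOn ℂ (a n i) (Metric.ball 0 (s n)))
    (hR : ∀ n, ∀ h : ℂ → ℂ, DifferentiableOn ℂ h (Metric.ball 0 (s (n + 1))) → ∀ M : ℝ,
        (∀ w ∈ Metric.ball (0 : ℂ) (s (n + 1)), ‖h w‖ ≤ M) → ∀ z ∈ Metric.ball (0 : ℂ) (s n),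
        ‖h z - vwA (N n) (p n) (a n) h z‖ ≤ ε n * M) (n : ℕ) (u : ℂ → X) (M : ℝ)
    (hu : DifferentiableOn ℂ u (Metric.ball 0 (s n)))
    (hM : ∀ w ∈ Metric.ball (0 : ℂ) (s n), ‖u w‖ ≤ M)
    (z : ℂ) (hz : z ∈ Metric.ball (0 : ℂ) (s 0)) :
      ‖vwT N p a n u z‖ ≤ (∏ j ∈ Finset.range n, ε j) * M := by
  obtain ⟨x', hx', hxe⟩ := exists_dual_vector'' ℂ (vwT N p a n u z)
  have h1 : ‖x' (vwT N p a n u z)‖ = ‖vwT N p a n u z‖ := by rw [hxe]; simp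
  rw [← h1, vwT_comp]
  refine vwT_bound N p a s hs ε ha hR n _ M (x'.differentiable.comp_differentiableOn hu) ?_ z hz
  intro w hw
  refine (x'.le_opNorm _).trans ?_
  have := hM w hw
  calc ‖x'‖ * ‖u w‖ ≤ 1 * M := by gcongr
    _ = M := one_mul M

lemma vw_local {X : Type*} [NormedAddCommGroup X] [NormedSpace ℂ X] [CompleteSpace X]
    (f : ℂ → X) (g : ℂ → ℝ) {R : ℝ} (hR : 0 < R) (hg : IntegrableOn g (Metric.ball 0 R))
    (hfg : ∀ᵐ ξ ∂(volume.restrict (Metric.ball 0 R)), ‖f ξ‖ ≤ g ξ) (W : Set (X →L[ℂ] ℂ))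
    (hW : ∀ x : X, (∀ x' ∈ W, x' x = 0) → x = 0)
    (hd : ∀ x' ∈ W, ∀ z ∈ Metric.closedBall (0 : ℂ) R, DifferentiableAt ℂ (fun w => x' (f w)) z) :
    DifferentiableAt ℂ f 0 := by
  set s : ℕ → ℝ := fun n => R * (1 - 1 / ((n : ℝ) + 2)) with hs
  have hsm : StrictMono s := by
    refine strictMono_nat_of_lt_succ fun n => ?_
    simp only [hs]
    gcongr
    linarith
  have hs0 : ∀ n, 0 < s n := by
    intro n
    have : 1 / ((n : ℝ) + 2) < 1 := by
      rw [div_lt_one (by positivity)]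
      have : (0 : ℝ) ≤ n := n.cast_nonneg
      linarith
    simp only [hs]
    exact mul_pos hR (by linarith)
  have hsR : ∀ n, s n ≤ R := by
    intro n
    have : 0 ≤ 1 / ((n : ℝ) + 2) := by positivity
    simp only [hs]
    nlinarith
  have hstep := fun n => vw_step f g hg hfg (hs0 n) (hsm n.lt_succ_self) (hsR (n + 1))
  choose B hB hstep using hstep
  set ε : ℕ → ℝ := fun n => (1 / 2) * (1 / (1 + B (n + 1))) with hε
  have hε0 : ∀ n, 0 < ε n := fun n => by
    have := hB (n + 1)
    simp only [hε]; positivity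
  choose N p a hp ha hAf hrem using fun n => hstep n (ε n) (hε0 n)
  have hεh : ∀ n, ε n ≤ 1 / 2 := fun n => by
    have h1 := hB (n + 1)
    have : 1 / (1 + B (n + 1)) ≤ 1 := by
      rw [div_le_one (by positivity)]; linarith
    simp only [hε]; linarith
  have hεB : ∀ n, ε n * B (n + 1) ≤ 1 / 2 := fun n => by
    have h1 := hB (n + 1)
    have : 1 / (1 + B (n + 1)) * B (n + 1) ≤ 1 := by
      rw [one_div_mul_eq_div, div_le_one (by positivity)]; linarith
    simp only [hε]; linarith
  have hprod0 : ∀ n, 0 ≤ ∏ j ∈ Finset.range n, ε j := fun n =>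
    Finset.prod_nonneg fun j _ => (hε0 j).le
  have hprod : ∀ n, ∏ j ∈ Finset.range n, ε j ≤ (1 / 2) ^ n := fun n => by
    calc ∏ j ∈ Finset.range n, ε j ≤ ∏ j ∈ Finset.range n, (1 / 2 : ℝ) :=
          Finset.prod_le_prod (fun j _ => (hε0 j).le) fun j _ => hεh j
      _ = _ := by simp
  have hsumm : Summable fun n => (∏ j ∈ Finset.range n, ε j) * B n := by
    rw [← summable_nat_add_iff 1]
    refine Summable.of_nonneg_of_le (fun n => mul_nonneg (hprod0 _) (hB _).le) (fun n => ?_)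
      (summable_geometric_of_lt_one (r := (1 / 2 : ℝ)) (by norm_num) (by norm_num))
    rw [Finset.prod_range_succ, mul_assoc]
    have h1 := hprod n
    have h2 := hεB n
    have h3 := hprod0 n
    have h4 : 0 ≤ ε n * B (n + 1) := mul_nonneg (hε0 n).le (hB _).le
    nlinarith
  set G : ℕ → ℂ → X := fun n => vwT N p a n (vwA (N n) (p n) (a n) f) with hG
  have hGd : ∀ n, DifferentiableOn ℂ (G n) (Metric.ball 0 (s 0)) := fun n => by
    refine vwT_diff N p a s hsm.monotone ha n _ ?_
    unfold vwA
    exact DifferentiableOn.fun_sum fun i _ => (ha n i).smul_const _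
  have hGb : ∀ n, ∀ w ∈ Metric.ball (0 : ℂ) (s 0),
      ‖G n w‖ ≤ (∏ j ∈ Finset.range n, ε j) * B n := fun n w hw => by
    refine vwT_bound' N p a s hsm.monotone ε ha hrem n _ _ ?_ (hAf n) w hw
    exact DifferentiableOn.fun_sum fun i _ => (ha n i).smul_const _
  have hpart : ∀ n w, ∑ j ∈ Finset.range n, G j w = f w - vwT N p a n f w := by
    intro n w
    induction n with
    | zero => simp [vwT]
    | succ n ih =>
      rw [Finset.sum_range_succ, ih]
      simp only [vwT]
      rw [vwT_sub]
      simp only [hG]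
      abel
  have hD := Complex.differentiableOn_tsum_of_summable_norm hsumm hGd Metric.isOpen_ball hGb
  have heq : ∀ w ∈ Metric.ball (0 : ℂ) (s 0), ∑' n, G n w = f w := by
    intro w hw
    have hSw : Summable fun n => G n w := Summable.of_norm_bounded hsumm fun n => hGb n w hw
    rw [← sub_eq_zero]
    apply hW
    intro x' hx'
    have hcont : ContinuousOn (fun w => x' (f w)) (Metric.closedBall 0 R) := fun z hz =>
      (hd x' hx' z hz).continuousAt.continuousWithinAt
    obtain ⟨M, hM⟩ := (isCompact_closedBall (0 : ℂ) R).exists_bound_of_continuousOn hcont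
    have ht1 : Filter.Tendsto (fun n => x' (∑ j ∈ Finset.range n, G j w - f w)) Filter.atTop
        (nhds (x' (∑' n, G n w - f w))) :=
      (x'.continuous.tendsto _).comp (hSw.hasSum.tendsto_sum_nat.sub_const _)
    have ht2 : Filter.Tendsto (fun n => x' (∑ j ∈ Finset.range n, G j w - f w)) Filter.atTop
        (nhds 0) := by
      refine squeeze_zero_norm (a := fun n => (1 / 2 : ℝ) ^ n * M) (fun n => ?_) ?_
      · rw [hpart, sub_sub_cancel_left, map_neg, norm_neg, vwT_comp]
        have hsub : Metric.ball (0 : ℂ) (s n) ⊆ Metric.closedBall 0 R :=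
          Metric.ball_subset_closedBall.trans (Metric.closedBall_subset_closedBall (hsR n))
        refine (vwT_bound N p a s hsm.monotone ε ha hrem n _ M ?_ ?_ w hw).trans ?_
        · exact fun z hz => (hd x' hx' z (hsub hz)).differentiableWithinAt
        · exact fun z hz => hM z (hsub hz)
        · have : 0 ≤ M := (norm_nonneg _).trans (hM 0 (by simpa using hR.le))
          gcongr
          exact hprod n
      · simpa using (tendsto_pow_atTop_nhds_zero_of_lt_one (r := (1 / 2 : ℝ)) (by norm_num)
          (by norm_num)).mul_const M
    exact tendsto_nhds_unique ht1 ht2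
  exact ((hD.congr fun w hw => (heq w hw).symm).differentiableAt
    (Metric.ball_mem_nhds _ (hs0 0)))

/-- A function `f : Ω → X` (Ω ⊆ ℂ open, X a complex Banach space) is
holomorphic iff it is locally `L¹`-bounded and very weakly holomorphic, i.e. there is a
separating set `W ⊆ X'` such that `x' ∘ f` is holomorphic for all `x' ∈ W`. -/
theorem very_weakly_holomorphic_iff {X : Type*} [NormedAddCommGroup X] [NormedSpace ℂ X]
    [CompleteSpace X] {Ω : Set ℂ} (hΩ : IsOpen Ω) (f : ℂ → X) :
    (∀ z ∈ Ω, DifferentiableAt ℂ f z) ↔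
      ((∃ g : ℂ → ℝ, LocallyIntegrableOn g Ω ∧
          ∀ᵐ ξ ∂(volume.restrict Ω), ‖f ξ‖ ≤ g ξ) ∧
        ∃ W : Set (X →L[ℂ] ℂ),
          (∀ x : X, (∀ x' ∈ W, x' x = 0) → x = 0) ∧
          ∀ x' ∈ W, ∀ z ∈ Ω, DifferentiableAt ℂ (fun w => x' (f w)) z) := by
  constructor
  · intro hf
    refine ⟨⟨fun z => ‖f z‖, ?_, Filter.Eventually.of_forall fun _ => le_rfl⟩, Set.univ, ?_, ?_⟩
    · refine ContinuousOn.locallyIntegrableOn ?_ hΩ.measurableSet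
      exact ContinuousOn.norm fun z hz => (hf z hz).continuousAt.continuousWithinAt
    · intro x hx
      obtain ⟨x', _, h⟩ := exists_dual_vector'' ℂ x
      rw [hx x' trivial] at h
      simpa using h.symm
    · intro x' _ z hz
      exact x'.differentiableAt.comp z (hf z hz)
  · rintro ⟨⟨g, hg, hfg⟩, W, hW, hd⟩ z hz
    obtain ⟨R, hR, hsub⟩ := Metric.nhds_basis_closedBall.mem_iff.1 (hΩ.mem_nhds hz)
    have hmp : MeasurePreserving (fun w : ℂ => z + w) volume volume :=
      measurePreserving_add_left volume z
    have hemb : MeasurableEmbedding (fun w : ℂ => z + w) := measurableEmbedding_addLeft z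
    have hpre : (fun w : ℂ => z + w) ⁻¹' Metric.ball z R = Metric.ball 0 R := by
      ext w; simp
    have hbΩ : Metric.ball z R ⊆ Ω := Metric.ball_subset_closedBall.trans hsub
    have hmpr : MeasurePreserving (fun w : ℂ => z + w) (volume.restrict (Metric.ball 0 R))
        (volume.restrict (Metric.ball z R)) := by
      rw [← hpre]
      exact hmp.restrict_preimage_emb hemb _
    have h0 : DifferentiableAt ℂ (fun w => f (z + w)) 0 := by
      refine vw_local (fun w => f (z + w)) (fun w => g (z + w)) hR ?_ ?_ W hW ?_
      · have : IntegrableOn g (Metric.ball z R) :=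
          (hg.integrableOn_compact_subset hsub (isCompact_closedBall z R)).mono_set
            Metric.ball_subset_closedBall
        exact (hmpr.integrable_comp_emb hemb).2 this
      · exact hmpr.quasiMeasurePreserving.ae
          (ae_restrict_of_ae_restrict_of_subset hbΩ hfg)
      · intro x' hx' w hw
        have h1 : z + w ∈ Ω := hsub (by simpa using hw)
        exact DifferentiableAt.comp (g := fun w => x' (f w)) w (hd x' hx' _ h1) (by fun_prop)
    have h1 : DifferentiableAt ℂ (fun w => f (z + w)) (z - z) := by rwa [sub_self]
    have h2 := DifferentiableAt.comp (g := fun w => f (z + w)) (f := fun w => w - z) z h1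
      (by fun_prop)
    have h3 : (fun w => f (z + w)) ∘ (fun w => w - z) = f := by
      funext w; simp
    rwa [h3] at h2
end

section
/- (Vector-valued Weyl lemma) Let Ω ⊆ ℝ^d be open, let X be a Banach space, and let f ∈ L¹_loc(Ω, X) satisfy Δf = 0 in the sense of distributions, i.e. ∫_Ω f(ξ) Δφ(ξ) dξ = 0 for every φ ∈ C_c^∞(Ω, ℝ). Then f has a harmonic representative: there exists f* ∈ C^∞(Ω, X) with Δf* = 0 on Ω and f = f* almost everywhere on Ω. -/
open MeasureTheory

/-- The `i`-th standard basis vector of `ℝ^d`. -/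
noncomputable def stdBasis {d : ℕ} (i : Fin d) : EuclideanSpace ℝ (Fin d) :=
  EuclideanSpace.single i (1 : ℝ)

/-- The Laplacian `Δu(x) = Σᵢ DᵢDᵢ u (x)` of a function `u : ℝ^d → X`. -/
noncomputable def lap {d : ℕ} {X : Type*} [NormedAddCommGroup X] [NormedSpace ℝ X]
    (u : EuclideanSpace ℝ (Fin d) → X) (x : EuclideanSpace ℝ (Fin d)) : X :=
  ∑ i : Fin d, fderiv ℝ (fun y => fderiv ℝ u y (stdBasis i)) x (stdBasis i)

abbrev EE (d : ℕ) := EuclideanSpace ℝ (Fin d)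

lemma stdBasis_inner {d : ℕ} (y : EE d) (i : Fin d) : inner ℝ y (stdBasis i) = y i := by
  have := EuclideanSpace.inner_single_right (𝕜 := ℝ) i (1 : ℝ) y
  simpa [stdBasis] using this

lemma hasFDerivAt_q {d : ℕ} (t : ℝ) (x ξ : EE d) :
    HasFDerivAt (fun y : EE d => t * ‖y - x‖ ^ 2) ((2 * t) • innerSL ℝ (ξ - x)) ξ := by
  have h1 : HasFDerivAt (fun y : EE d => y - x) (ContinuousLinearMap.id ℝ (EE d)) ξ :=
    (hasFDerivAt_id ξ).sub_const x
  have h := (h1.norm_sq).const_mul t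
  refine h.congr_fderiv ?_
  ext v
  simp only [smul_apply, ContinuousLinearMap.comp_apply,
    ContinuousLinearMap.id_apply, smul_eq_mul, nsmul_eq_mul]
  push_cast
  ring

lemma fderiv_radial {d : ℕ} {G : ℝ → ℝ} (hG : ContDiff ℝ (⊤ : ℕ∞) G) (t : ℝ) (x ξ : EE d)
    (i : Fin d) : fderiv ℝ (fun y : EE d => G (t * ‖y - x‖ ^ 2)) ξ (stdBasis i)
      = 2 * t * deriv G (t * ‖ξ - x‖ ^ 2) * (ξ - x) i := by
  have h1 : HasDerivAt G (deriv G (t * ‖ξ - x‖ ^ 2)) (t * ‖ξ - x‖ ^ 2) :=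
    (hG.differentiable (by simp)).differentiableAt.hasDerivAt
  have h2 := h1.comp_hasFDerivAt ξ (hasFDerivAt_q t x ξ)
  have h3 : HasFDerivAt (fun y : EE d => G (t * ‖y - x‖ ^ 2)) _ ξ := h2
  rw [h3.fderiv]
  simp [stdBasis_inner]
  ring

lemma lap_radial {d : ℕ} {G : ℝ → ℝ} (hG : ContDiff ℝ (⊤ : ℕ∞) G) (t : ℝ) (x ξ : EE d) :
    lap (fun y : EE d => G (t * ‖y - x‖ ^ 2)) ξ
      = 2 * d * t * deriv G (t * ‖ξ - x‖ ^ 2)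
        + 4 * t ^ 2 * ‖ξ - x‖ ^ 2 * deriv (deriv G) (t * ‖ξ - x‖ ^ 2) := by
  have hG' : ContDiff ℝ (⊤ : ℕ∞) (deriv G) := (contDiff_infty_iff_deriv.1 hG).2
  unfold lap
  have key : ∀ i : Fin d, fderiv ℝ (fun y => fderiv ℝ (fun y : EE d => G (t * ‖y - x‖ ^ 2)) y
      (stdBasis i)) ξ (stdBasis i) = 2 * t * deriv G (t * ‖ξ - x‖ ^ 2)
        + 4 * t ^ 2 * deriv (deriv G) (t * ‖ξ - x‖ ^ 2) * ((ξ - x) i) ^ 2 := by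
    intro i
    have e : (fun y => fderiv ℝ (fun y : EE d => G (t * ‖y - x‖ ^ 2)) y (stdBasis i))
        = fun y => (2 * t) * (deriv G (t * ‖y - x‖ ^ 2) * (innerSL ℝ (stdBasis i) (y - x))) := by
      funext y
      rw [fderiv_radial hG, innerSL_apply_apply, real_inner_comm, stdBasis_inner]
      ring
    have h0 : DifferentiableAt ℝ (fun y : EE d => deriv G (t * ‖y - x‖ ^ 2)) ξ :=
      (hG'.differentiable (by simp)).differentiableAt.comp ξ
        (hasFDerivAt_q t x ξ).differentiableAt
    have h1 : HasFDerivAt (fun y : EE d => innerSL ℝ (stdBasis i) (y - x))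
        (innerSL ℝ (stdBasis i)) ξ := by
      have h1 : HasFDerivAt (fun y : EE d => y - x) (ContinuousLinearMap.id ℝ (EE d)) ξ :=
        (hasFDerivAt_id ξ).sub_const x
      exact ((innerSL ℝ (stdBasis i : EE d)).hasFDerivAt.comp ξ h1).congr_fderiv (by ext v; rfl)
    have h4 : HasFDerivAt (fun y => (2 * t) * (deriv G (t * ‖y - x‖ ^ 2) *
      (innerSL ℝ (stdBasis i) (y - x)))) _ ξ := (h0.hasFDerivAt.mul h1).const_mul (2 * t)
    rw [e, h4.fderiv]
    have h2 : inner ℝ (stdBasis i : EE d) (ξ - x) = (ξ - x) i := by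
      rw [real_inner_comm, stdBasis_inner]
    have h3 : inner ℝ (stdBasis i : EE d) (stdBasis i) = 1 := by
      rw [stdBasis_inner]; simp [stdBasis]
    simp only [smul_apply, add_apply, fderiv_radial hG',
      innerSL_apply_apply, h2, h3, smul_eq_mul]
    ring
  rw [Finset.sum_congr rfl (fun i _ => key i), Finset.sum_add_distrib, ← Finset.mul_sum,
    Finset.sum_const, ← Finset.mul_sum, ← EuclideanSpace.real_norm_sq_eq]
  simp only [Finset.card_univ, Fintype.card_fin, nsmul_eq_mul]
  ring

/-- profile -/
noncomputable def hh (s : ℝ) : ℝ := expNegInvGlue (1 - s)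

lemma hh_contDiff : ContDiff ℝ (⊤ : ℕ∞) hh :=
  expNegInvGlue.contDiff.comp (contDiff_const.sub contDiff_id)

lemma hh_zero {s : ℝ} (hs : 1 ≤ s) : hh s = 0 := expNegInvGlue.zero_of_nonpos (by linarith)

lemma hh_nonneg (s : ℝ) : 0 ≤ hh s := expNegInvGlue.nonneg _

lemma hh_le {s : ℝ} (hs : 0 ≤ s) : hh s ≤ hh 0 := expNegInvGlue.monotone (by linarith)

/-- primitive of the profile -/
noncomputable def HH (s : ℝ) : ℝ := ∫ t in (1 : ℝ)..s, hh t

lemma HH_deriv : deriv HH = hh := by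
  funext s
  exact Continuous.deriv_integral _ hh_contDiff.continuous _ _

lemma HH_contDiff : ContDiff ℝ (⊤ : ℕ∞) HH := by
  rw [contDiff_infty_iff_deriv]
  refine ⟨fun s => ?_, by rw [HH_deriv]; exact hh_contDiff⟩
  exact (hh_contDiff.continuous.integral_hasStrictDerivAt 1 s).hasDerivAt.differentiableAt

lemma HH_zero {s : ℝ} (hs : 1 ≤ s) : HH s = 0 := by
  unfold HH
  rw [intervalIntegral.integral_congr (g := fun _ => 0)]
  · simp
  · intro t ht
    rw [Set.uIcc_of_le hs] at ht
    exact hh_zero ht.1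

lemma deriv_hh_zero {s : ℝ} (hs : 1 < s) : deriv hh s = 0 := by
  have : hh =ᶠ[nhds s] fun _ => 0 := by
    filter_upwards [lt_mem_nhds hs] with t ht using hh_zero ht.le
  rw [this.deriv_eq]; simp

lemma contDiff_radial {d : ℕ} {G : ℝ → ℝ} (hG : ContDiff ℝ (⊤ : ℕ∞) G) (t : ℝ) (x : EE d) :
    ContDiff ℝ (⊤ : ℕ∞) (fun y : EE d => G (t * ‖y - x‖ ^ 2)) :=
  hG.comp (contDiff_const.mul ((contDiff_id.sub contDiff_const).norm_sq ℝ))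

lemma support_radial {d : ℕ} {G : ℝ → ℝ} (hG : ∀ s, 1 ≤ s → G s = 0) {a : ℝ} (ha : 0 < a)
    (x : EE d) : Function.support (fun y : EE d => G (a ^ 2 * ‖y - x‖ ^ 2)) ⊆
      Metric.closedBall x a⁻¹ := by
  intro y hy
  by_contra h
  apply hy
  apply hG
  rw [Metric.mem_closedBall, dist_eq_norm, not_le] at h
  rw [← mul_pow]
  apply one_le_pow₀
  have := mul_lt_mul_of_pos_left h ha
  rw [mul_inv_cancel₀ ha.ne'] at this
  exact this.le

lemma tsupport_radial {d : ℕ} {G : ℝ → ℝ} (hG : ∀ s, 1 ≤ s → G s = 0) {a : ℝ} (ha : 0 < a)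
    (x : EE d) : tsupport (fun y : EE d => G (a ^ 2 * ‖y - x‖ ^ 2)) ⊆
      Metric.closedBall x a⁻¹ :=
  closure_minimal (support_radial hG ha x) Metric.isClosed_closedBall

lemma hcs_radial {d : ℕ} {G : ℝ → ℝ} (hG : ∀ s, 1 ≤ s → G s = 0) {a : ℝ} (ha : 0 < a)
    (x : EE d) : HasCompactSupport (fun y : EE d => G (a ^ 2 * ‖y - x‖ ^ 2)) :=
  (isCompact_closedBall x a⁻¹).of_isClosed_subset (isClosed_tsupport _) (tsupport_radial hG ha x)

/-- transport of integrals -/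
lemma int_transport {d : ℕ} {X : Type*} [NormedAddCommGroup X] [NormedSpace ℝ X]
    {Ω K : Set (EE d)} (hΩ : MeasurableSet Ω) (hK : K ⊆ Ω)
    (f : EE d → X) (g : EE d → ℝ) (hg : ∀ ξ, ξ ∉ K → g ξ = 0) :
    ∫ ξ in Ω, g ξ • f ξ = ∫ ξ, g ξ • K.indicator f ξ := by
  rw [← integral_indicator hΩ]
  congr 1
  funext ξ
  by_cases h : ξ ∈ K
  · simp [h, hK h]
  · by_cases h' : ξ ∈ Ω <;> simp [h, h', hg ξ h]

/-- the mollification -/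
noncomputable def TT {d : ℕ} {X : Type*} [NormedAddCommGroup X] [NormedSpace ℝ X]
    (Ω : Set (EE d)) (f : EE d → X) (a : ℝ) (x : EE d) : X :=
  ∫ ξ in Ω, (a ^ d * hh (a ^ 2 * ‖ξ - x‖ ^ 2)) • f ξ

lemma TT_eq {d : ℕ} {X : Type*} [NormedAddCommGroup X] [NormedSpace ℝ X]
    {Ω K : Set (EE d)} (hΩ : IsOpen Ω) (hK : K ⊆ Ω) (f : EE d → X) {a : ℝ} (ha : 0 < a) (x : EE d)
    (hx : Metric.closedBall x a⁻¹ ⊆ K) :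
    TT Ω f a x = ∫ ξ, (a ^ d * hh (a ^ 2 * ‖ξ - x‖ ^ 2)) • K.indicator f ξ := by
  apply int_transport hΩ.measurableSet hK
  intro ξ hξ
  have : hh (a ^ 2 * ‖ξ - x‖ ^ 2) = 0 := by
    by_contra h
    exact hξ (hx (support_radial (fun s => hh_zero) ha x h))
  simp [this]

lemma TT_deriv {d : ℕ} {X : Type*} [NormedAddCommGroup X] [NormedSpace ℝ X]
    [CompleteSpace X] {Ω : Set (EE d)} (hΩ : IsOpen Ω)
    (f : EE d → X) (hf : LocallyIntegrableOn f Ω)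
    (hweak : ∀ φ : EE d → ℝ, ContDiff ℝ (⊤ : ℕ∞) φ →
      HasCompactSupport φ → tsupport φ ⊆ Ω → ∫ ξ in Ω, (lap φ ξ) • f ξ = 0)
    {b : ℝ} (hb : 0 < b) (x : EE d) (hx : Metric.closedBall x b⁻¹ ⊆ Ω) {a : ℝ} (hab : b < a) :
    HasDerivAt (fun a => TT Ω f a x) 0 a := by
  set K := Metric.closedBall x b⁻¹ with hKdef
  have hKm : MeasurableSet K := Metric.isClosed_closedBall.measurableSet
  have hFi : Integrable (K.indicator f) := by
    rw [integrable_indicator_iff hKm]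
    exact hf.integrableOn_compact_subset hx (isCompact_closedBall _ _)
  have ha : 0 < a := hb.trans hab
  have hsub : ∀ a', b < a' → Metric.closedBall x a'⁻¹ ⊆ K := fun a' h' =>
    Metric.closedBall_subset_closedBall (inv_anti₀ hb h'.le)
  have hhc := hh_contDiff.continuous
  have hhc' : Continuous (deriv hh) := (contDiff_infty_iff_deriv.1 hh_contDiff).2.continuous
  let g : ℝ → EE d → ℝ := fun a ξ => a ^ d * hh (a ^ 2 * ‖ξ - x‖ ^ 2)
  let g' : ℝ → EE d → ℝ := fun a ξ => (d * a ^ (d - 1)) * hh (a ^ 2 * ‖ξ - x‖ ^ 2)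
    + a ^ d * (deriv hh (a ^ 2 * ‖ξ - x‖ ^ 2) * (2 * a * ‖ξ - x‖ ^ 2))
  have hgc : Continuous (fun p : ℝ × EE d => g p.1 p.2) := by
    simp only [g]; fun_prop
  have hgc' : Continuous (fun p : ℝ × EE d => g' p.1 p.2) := by
    simp only [g']; fun_prop
  have hgd : ∀ a ξ, HasDerivAt (fun a => g a ξ) (g' a ξ) a := by
    intro a ξ
    have h1 : HasDerivAt (fun a : ℝ => a ^ 2 * ‖ξ - x‖ ^ 2) (2 * a * ‖ξ - x‖ ^ 2) a := by
      simpa using (hasDerivAt_pow 2 a).mul_const (‖ξ - x‖ ^ 2)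
    have h2 : HasDerivAt hh (deriv hh (a ^ 2 * ‖ξ - x‖ ^ 2)) (a ^ 2 * ‖ξ - x‖ ^ 2) :=
      (hh_contDiff.differentiable (by simp)).differentiableAt.hasDerivAt
    exact (hasDerivAt_pow d a).mul (HasDerivAt.comp (h₂ := hh) a h2 h1)
  obtain ⟨C, hC⟩ := ((isCompact_closedBall a 1).prod
    (isCompact_closedBall x b⁻¹)).exists_bound_of_continuousOn hgc'.continuousOn
  have hcont : ∀ (u : EE d → ℝ) , Continuous u →
      AEStronglyMeasurable (fun ξ => u ξ • K.indicator f ξ) := fun u hu =>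
    hu.aestronglyMeasurable.smul hFi.aestronglyMeasurable
  have hbound : ∀ (a' : ℝ) (ξ : EE d), a' ∈ Metric.closedBall a 1 →
      ‖g' a' ξ • K.indicator f ξ‖ ≤ C * ‖K.indicator f ξ‖ := by
    intro a' ξ ha'
    by_cases h : ξ ∈ K
    · rw [norm_smul]
      exact mul_le_mul_of_nonneg_right (hC (a', ξ) ⟨ha', h⟩) (norm_nonneg _)
    · simp [h]
  have hder := (hasDerivAt_integral_of_dominated_loc_of_deriv_le (μ := volume)
    (F := fun a ξ => g a ξ • K.indicator f ξ) (F' := fun a ξ => g' a ξ • K.indicator f ξ)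
    (x₀ := a) (s := Metric.closedBall a 1) (bound := fun ξ => C * ‖K.indicator f ξ‖)
    (Metric.closedBall_mem_nhds a one_pos)
    (Filter.Eventually.of_forall fun a' => hcont _ (by fun_prop))
    (by
      obtain ⟨C', hC'⟩ := (isCompact_closedBall x b⁻¹).exists_bound_of_continuousOn
        (f := g a) (by fun_prop : Continuous (g a)).continuousOn
      refine (hFi.norm.const_mul C').mono' (hcont _ (by fun_prop)) (Filter.Eventually.of_forall ?_)
      intro ξ
      by_cases h : ξ ∈ K
      · simp only [norm_smul]
        exact mul_le_mul_of_nonneg_right (hC' ξ h) (norm_nonneg _)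
      · simp [h])
    (hcont _ (by fun_prop))
    (Filter.Eventually.of_forall fun ξ a' ha' => hbound a' ξ ha')
    (hFi.norm.const_mul C)
    (Filter.Eventually.of_forall fun ξ a' _ => (hgd a' ξ).smul_const _)).2
  have hz : ∫ ξ, g' a ξ • K.indicator f ξ = 0 := by
    have hw := hweak (fun y => HH (a ^ 2 * ‖y - x‖ ^ 2)) (contDiff_radial HH_contDiff _ x)
      (hcs_radial (fun s => HH_zero) ha x)
      ((tsupport_radial (fun s => HH_zero) ha x).trans ((hsub a hab).trans hx))
    have e : ∀ ξ, lap (fun y => HH (a ^ 2 * ‖y - x‖ ^ 2)) ξ = (2 * a ^ 3 / a ^ d) * g' a ξ := by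
      intro ξ
      rw [lap_radial HH_contDiff, HH_deriv]
      simp only [g']
      rcases d with _ | n
      · simp; ring
      · simp only [Nat.add_sub_cancel]
        field_simp
        ring
    rw [int_transport hΩ.measurableSet hx f _ ?_] at hw
    · simp only [e, mul_smul] at hw
      rw [integral_smul] at hw
      have : (2 * a ^ 3 / a ^ d) ≠ 0 := by positivity
      exact (smul_eq_zero.1 hw).resolve_left this
    · intro ξ hξ
      have h1 : 1 < a ^ 2 * ‖ξ - x‖ ^ 2 := by
        rw [hKdef, Metric.mem_closedBall, dist_eq_norm, not_le] at hξ
        rw [← mul_pow]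
        apply one_lt_pow₀ _ two_ne_zero
        calc 1 = b * b⁻¹ := (mul_inv_cancel₀ hb.ne').symm
          _ < a * ‖ξ - x‖ := mul_lt_mul hab hξ.le (by positivity) ha.le
      rw [lap_radial HH_contDiff, HH_deriv, hh_zero h1.le, deriv_hh_zero h1]
      simp
  rw [hz] at hder
  refine hder.congr_of_eventuallyEq ?_
  filter_upwards [lt_mem_nhds hab] with a' ha'
  exact TT_eq hΩ hx f (hb.trans ha') x (hsub a' ha')

lemma TT_const {d : ℕ} {X : Type*} [NormedAddCommGroup X] [NormedSpace ℝ X]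
    [CompleteSpace X] {Ω : Set (EE d)} (hΩ : IsOpen Ω)
    (f : EE d → X) (hf : LocallyIntegrableOn f Ω)
    (hweak : ∀ φ : EE d → ℝ, ContDiff ℝ (⊤ : ℕ∞) φ →
      HasCompactSupport φ → tsupport φ ⊆ Ω → ∫ ξ in Ω, (lap φ ξ) • f ξ = 0)
    {b : ℝ} (hb : 0 < b) (x : EE d) (hx : Metric.closedBall x b⁻¹ ⊆ Ω) {a a' : ℝ} (hab : b < a)
    (hab' : b < a') : TT Ω f a x = TT Ω f a' x := by
  have hd : ∀ a ∈ Set.Ioi b, HasDerivAt (fun a => TT Ω f a x) 0 a := fun a h =>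
    TT_deriv hΩ f hf hweak hb x hx h
  obtain ⟨c, hc⟩ := isOpen_Ioi.exists_is_const_of_fderiv_eq_zero (𝕜 := ℝ)
    (isPreconnected_Ioi (a := b))
    (f := fun a => TT Ω f a x) (fun a h => (hd a h).differentiableAt.differentiableWithinAt)
    (fun a h => by simpa using (hd a h).hasFDerivAt.fderiv)
  exact (hc a hab).trans (hc a' hab').symm

/-- normalisation constant -/
noncomputable def cc (d : ℕ) : ℝ := ∫ y : EE d, hh (‖y‖ ^ 2)

lemma cc_pos (d : ℕ) : 0 < cc d := by
  have hc : Continuous (fun y : EE d => hh (‖y‖ ^ 2)) := by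
    have := hh_contDiff.continuous
    fun_prop
  have hs : HasCompactSupport (fun y : EE d => hh (‖y‖ ^ 2)) := by
    have := hcs_radial (d := d) (G := hh) (fun s => hh_zero) one_pos 0
    simpa using this
  refine hc.integral_pos_of_hasCompactSupport_nonneg_nonzero hs (fun y => hh_nonneg _) (x := 0) ?_
  have : 0 < hh 0 := expNegInvGlue.pos_of_pos (by norm_num)
  simpa using this.ne'

lemma int_scale (d : ℕ) {a : ℝ} (ha : 0 < a) (x : EE d) :
    ∫ ξ : EE d, (cc d)⁻¹ * (a ^ d * hh (a ^ 2 * ‖ξ - x‖ ^ 2)) = 1 := by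
  rw [integral_const_mul, integral_const_mul,
    integral_sub_right_eq_self (fun ξ : EE d => hh (a ^ 2 * ‖ξ‖ ^ 2)) x]
  have e : ∀ ξ : EE d, hh (a ^ 2 * ‖ξ‖ ^ 2) = (fun y : EE d => hh (‖y‖ ^ 2)) (a • ξ) := by
    intro ξ
    simp only [norm_smul, mul_pow, Real.norm_eq_abs, sq_abs]
  simp_rw [e]
  rw [Measure.integral_comp_smul volume (fun y : EE d => hh (‖y‖ ^ 2)) a]
  have h1 : |(a ^ Module.finrank ℝ (EE d))⁻¹| = (a ^ d)⁻¹ := by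
    rw [abs_of_pos (by positivity)]
    simp
  rw [h1]
  change (cc d)⁻¹ * (a ^ d * ((a ^ d)⁻¹ * cc d)) = 1
  have := (cc_pos d).ne'
  field_simp

lemma ae_lim {d : ℕ} {X : Type*} [NormedAddCommGroup X] [NormedSpace ℝ X]
    [CompleteSpace X] {F : EE d → X} (hF : LocallyIntegrable F) :
    ∀ᵐ x, Filter.Tendsto
      (fun a : ℝ => ∫ ξ, ((cc d)⁻¹ * (a ^ d * hh (a ^ 2 * ‖ξ - x‖ ^ 2))) • F ξ)
      Filter.atTop (nhds (F x)) := by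
  filter_upwards [(Besicovitch.vitaliFamily (volume : Measure (EE d))).ae_tendsto_average_norm_sub
    hF] with x h₀
  have := (h₀.comp (Besicovitch.tendsto_filterAt volume x)).comp
    (tendsto_inv_atTop_nhdsGT_zero (𝕜 := ℝ))
  apply tendsto_integral_smul_of_tendsto_average_norm_sub
    ((cc d)⁻¹ * hh 0 * volume.real (Metric.ball (0 : EE d) 1)) this
  · filter_upwards with i using hF.integrableOn_isCompact (isCompact_closedBall _ _)
  · apply tendsto_const_nhds.congr'
    filter_upwards [Filter.eventually_gt_atTop 0] with a ha using (int_scale d ha x).symm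
  · filter_upwards [Filter.eventually_gt_atTop 0] with a ha
    intro ξ hξ
    apply support_radial (fun s => hh_zero) ha x
    intro h0
    apply hξ
    simp only at h0
    simp [h0]
  · filter_upwards [Filter.eventually_gt_atTop 0] with a ha ξ
    have hc := cc_pos d
    have hn := hh_nonneg (a ^ 2 * ‖ξ - x‖ ^ 2)
    have hv : 0 < volume.real (Metric.ball (0 : EE d) 1) :=
      ENNReal.toReal_pos (Metric.measure_ball_pos _ _ one_pos).ne' measure_ball_lt_top.ne
    rw [abs_of_nonneg (by positivity), Measure.addHaar_real_closedBall _ _ (by positivity)]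
    have e : (cc d)⁻¹ * hh 0 * volume.real (Metric.ball (0 : EE d) 1) /
        (a⁻¹ ^ Module.finrank ℝ (EE d) * volume.real (Metric.ball (0 : EE d) 1))
        = (cc d)⁻¹ * (a ^ d * hh 0) := by
      rw [finrank_euclideanSpace_fin, inv_pow]
      field_simp
    rw [e]
    have := hh_le (s := a ^ 2 * ‖ξ - x‖ ^ 2) (by positivity)
    gcongr

lemma lap_congr {d : ℕ} {X : Type*} [NormedAddCommGroup X] [NormedSpace ℝ X]
    {u v : EE d → X} {x : EE d} (h : u =ᶠ[nhds x] v) : lap u x = lap v x := by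
  unfold lap
  refine Finset.sum_congr rfl fun i _ => ?_
  have h1 : (fun y => fderiv ℝ u y (stdBasis i)) =ᶠ[nhds x]
      (fun y => fderiv ℝ v y (stdBasis i)) := by
    filter_upwards [h.fderiv (𝕜 := ℝ)] with y hy
    rw [hy]
  rw [h1.fderiv_eq]

lemma lap_zero_of_notMem {d : ℕ} {φ : EE d → ℝ} {x : EE d} (h : x ∉ tsupport φ) :
    lap φ x = 0 := by
  rw [lap_congr (notMem_tsupport_iff_eventuallyEq.1 h)]
  have : fderiv ℝ (0 : EE d → ℝ) = 0 := fderiv_const (0 : ℝ)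
  simp [lap, this]

open scoped Convolution in
lemma lap_conv {d : ℕ} {X : Type*} [NormedAddCommGroup X] [NormedSpace ℝ X]
    [CompleteSpace X] {F : EE d → X} (hF : LocallyIntegrable F) {ρ : EE d → ℝ}
    (hρ : ContDiff ℝ (⊤ : ℕ∞) ρ) (hc : HasCompactSupport ρ) (x : EE d) :
    lap (F ⋆[(ContinuousLinearMap.lsmul ℝ ℝ).flip, volume] ρ) x = ∫ t, lap ρ (x - t) • F t := by
  have key : ∀ (σ : EE d → ℝ), ContDiff ℝ (⊤ : ℕ∞) σ → HasCompactSupport σ → ∀ y v,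
      fderiv ℝ (F ⋆[(ContinuousLinearMap.lsmul ℝ ℝ).flip, volume] σ) y v
      = (F ⋆[(ContinuousLinearMap.lsmul ℝ ℝ).flip, volume] (fun z => fderiv ℝ σ z v)) y := by
    intro σ hσ hcσ y v
    have hσ1 : ContDiff ℝ 1 σ := hσ.of_le (by exact_mod_cast le_top)
    rw [(hcσ.hasFDerivAt_convolution_right _ hF hσ1 y).fderiv]
    exact convolution_precompR_apply _ hF (hcσ.fderiv ℝ) (hσ1.continuous_fderiv one_ne_zero) y v
  have hs : ∀ (σ : EE d → ℝ) (v : EE d), ContDiff ℝ (⊤ : ℕ∞) σ →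
      ContDiff ℝ (⊤ : ℕ∞) (fun z => fderiv ℝ σ z v) := fun σ v hσ =>
    (hσ.fderiv_right (m := (⊤ : ℕ∞)) (by simp)).clm_apply contDiff_const
  have hsc : ∀ (σ : EE d → ℝ) (v : EE d), HasCompactSupport σ →
      HasCompactSupport (fun z => fderiv ℝ σ z v) := fun σ v hσ =>
    hσ.fderiv_apply ℝ v
  have e : ∀ i, fderiv ℝ (fun y => fderiv ℝ
      (F ⋆[(ContinuousLinearMap.lsmul ℝ ℝ).flip, volume] ρ) y (stdBasis i)) x (stdBasis i)
      = ∫ t, fderiv ℝ (fun z => fderiv ℝ ρ z (stdBasis i)) (x - t) (stdBasis i) • F t := by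
    intro i
    have e1 : (fun y => fderiv ℝ
      (F ⋆[(ContinuousLinearMap.lsmul ℝ ℝ).flip, volume] ρ) y (stdBasis i)) =
      (F ⋆[(ContinuousLinearMap.lsmul ℝ ℝ).flip, volume] (fun z => fderiv ℝ ρ z (stdBasis i))) :=
      funext fun y => key ρ hρ hc y _
    rw [e1, key _ (hs ρ _ hρ) (hsc ρ _ hc)]
    rfl
  have hint : ∀ i : Fin d, Integrable (fun t =>
      fderiv ℝ (fun z => fderiv ℝ ρ z (stdBasis i)) (x - t) (stdBasis i) • F t) := by
    intro i
    exact (hsc _ (stdBasis i) (hsc ρ (stdBasis i) hc)).convolutionExists_right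
      (ContinuousLinearMap.lsmul ℝ ℝ).flip hF (hs _ _ (hs ρ _ hρ)).continuous x
  unfold lap
  rw [Finset.sum_congr rfl fun i _ => e i, ← integral_finsetSum _ fun i _ => hint i]
  simp only [Finset.sum_smul]

open scoped Convolution in
lemma TT_local {d : ℕ} {X : Type*} [NormedAddCommGroup X] [NormedSpace ℝ X]
    [CompleteSpace X] {Ω : Set (EE d)} (hΩ : IsOpen Ω)
    (f : EE d → X) (hf : LocallyIntegrableOn f Ω)
    (hweak : ∀ φ : EE d → ℝ, ContDiff ℝ (⊤ : ℕ∞) φ →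
      HasCompactSupport φ → tsupport φ ⊆ Ω → ∫ ξ in Ω, (lap φ ξ) • f ξ = 0)
    {r : ℝ} (hr : 0 < r) (x₀ : EE d) (hx : Metric.closedBall x₀ (2 * r) ⊆ Ω) {a : ℝ}
    (ha : r⁻¹ < a) :
    ∃ u : EE d → X, ContDiff ℝ (⊤ : ℕ∞) u ∧ (∀ x ∈ Metric.ball x₀ r, u x = (cc d)⁻¹ • TT Ω f a x)
      ∧ (∀ x ∈ Metric.ball x₀ r, lap u x = 0) := by
  set K := Metric.closedBall x₀ (2 * r) with hKdef
  have hKm : MeasurableSet K := Metric.isClosed_closedBall.measurableSet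
  have hFi : Integrable (K.indicator f) := by
    rw [integrable_indicator_iff hKm]
    exact hf.integrableOn_compact_subset hx (isCompact_closedBall _ _)
  have hF := hFi.locallyIntegrable
  have ha0 : 0 < a := (inv_pos.2 hr).trans ha
  have har : a⁻¹ ≤ r := by
    have := inv_anti₀ (inv_pos.2 hr) ha.le
    rwa [inv_inv] at this
  have hsub : ∀ x ∈ Metric.ball x₀ r, Metric.closedBall x a⁻¹ ⊆ K := by
    intro x hx'
    apply Metric.closedBall_subset_closedBall'
    have := Metric.mem_ball.1 hx'
    linarith
  let G : ℝ → ℝ := fun s => (cc d)⁻¹ * (a ^ d * hh s)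
  have hG : ContDiff ℝ (⊤ : ℕ∞) G := contDiff_const.mul (contDiff_const.mul hh_contDiff)
  have hG0 : ∀ s, 1 ≤ s → G s = 0 := fun s hs => by simp [G, hh_zero hs]
  let ρ : EE d → ℝ := fun y => G (a ^ 2 * ‖y - 0‖ ^ 2)
  have hρ : ContDiff ℝ (⊤ : ℕ∞) ρ := contDiff_radial hG _ 0
  have hρc : HasCompactSupport ρ := hcs_radial hG0 ha0 0
  refine ⟨K.indicator f ⋆[(ContinuousLinearMap.lsmul ℝ ℝ).flip, volume] ρ,
    hρc.contDiff_convolution_right _ hF hρ, ?_, ?_⟩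
  · intro x hx'
    rw [TT_eq hΩ hx f ha0 x (hsub x hx'), ← integral_smul, convolution_def]
    congr 1
    funext ξ
    simp only [ρ, G, ContinuousLinearMap.flip_apply, ContinuousLinearMap.lsmul_apply, sub_zero,
      mul_smul, norm_sub_rev x ξ]
  · intro x hx'
    rw [lap_conv hF hρ hρc]
    have hw := hweak (fun y => G (a ^ 2 * ‖y - x‖ ^ 2)) (contDiff_radial hG _ x)
      (hcs_radial hG0 ha0 x) ((tsupport_radial hG0 ha0 x).trans ((hsub x hx').trans hx))
    rw [int_transport hΩ.measurableSet hx f _ (fun ξ hξ => lap_zero_of_notMem fun h =>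
      hξ (hsub x hx' (tsupport_radial hG0 ha0 x h)))] at hw
    rw [← hw]
    congr 1
    funext ξ
    simp only [ρ]
    rw [lap_radial hG, lap_radial hG, sub_zero, norm_sub_rev x ξ]

/-- **vector-valued Weyl lemma.** If `f ∈ L¹_loc(Ω, X)` satisfies `Δf = 0`
in the sense of distributions, then `f` has a harmonic representative `f* ∈ C^∞(Ω, X)`
with `Δf* = 0` on `Ω` and `f = f*` a.e. on `Ω`. -/
theorem weyl_lemma {d : ℕ} {X : Type*} [NormedAddCommGroup X] [NormedSpace ℝ X]
    [CompleteSpace X] {Ω : Set (EuclideanSpace ℝ (Fin d))} (hΩ : IsOpen Ω)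
    (f : EuclideanSpace ℝ (Fin d) → X) (hf : LocallyIntegrableOn f Ω)
    (hweak : ∀ φ : EuclideanSpace ℝ (Fin d) → ℝ, ContDiff ℝ (⊤ : ℕ∞) φ →
      HasCompactSupport φ → tsupport φ ⊆ Ω → ∫ ξ in Ω, (lap φ ξ) • f ξ = 0) :
    ∃ fstar : EuclideanSpace ℝ (Fin d) → X,
      ContDiffOn ℝ (⊤ : ℕ∞) fstar Ω ∧ (∀ x ∈ Ω, lap fstar x = 0) ∧
      f =ᵐ[volume.restrict Ω] fstar := by
  classical
  have hloc : ∀ x ∈ Ω, ∃ r : ℝ, 0 < r ∧ Metric.closedBall x (2 * r) ⊆ Ω := by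
    intro x hx
    obtain ⟨ε, hε, h⟩ := Metric.nhds_basis_closedBall.mem_iff.1 (hΩ.mem_nhds hx)
    exact ⟨ε / 2, by positivity, by rwa [mul_div_cancel₀ _ two_ne_zero]⟩
  let R : EuclideanSpace ℝ (Fin d) → ℝ := fun x => if hx : x ∈ Ω then (hloc x hx).choose else 1
  let fs : EuclideanSpace ℝ (Fin d) → X := fun x => (cc d)⁻¹ • TT Ω f ((R x)⁻¹ + 1) x
  have hfs : ∀ x ∈ Ω, ∀ b : ℝ, 0 < b → Metric.closedBall x b⁻¹ ⊆ Ω → ∀ a, b < a →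
      fs x = (cc d)⁻¹ • TT Ω f a x := by
    intro x hx b hb hxb a hab
    have hR : R x = (hloc x hx).choose := by simp [R, hx]
    obtain ⟨hR0, hRs⟩ := (hloc x hx).choose_spec
    rw [← hR] at hR0 hRs
    have h1 : Metric.closedBall x (R x)⁻¹⁻¹ ⊆ Ω := by
      rw [inv_inv]
      exact (Metric.closedBall_subset_closedBall (by linarith)).trans hRs
    have h2 := TT_const hΩ f hf hweak (inv_pos.2 hR0) x h1 (a := (R x)⁻¹ + 1)
      (a' := max ((R x)⁻¹ + 1) a) (by linarith) (lt_max_of_lt_left (by linarith))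
    have h3 := TT_const hΩ f hf hweak hb x hxb (a := a)
      (a' := max ((R x)⁻¹ + 1) a) hab (lt_max_of_lt_right hab)
    simp only [fs]
    rw [h2, h3]
  have hin : ∀ x₀ : EE d, ∀ r : ℝ, 0 < r → Metric.closedBall x₀ (2 * r) ⊆ Ω →
      ∀ x ∈ Metric.ball x₀ r, x ∈ Ω ∧ Metric.closedBall x r⁻¹⁻¹ ⊆ Ω := by
    intro x₀ r hr h x hx
    have : Metric.closedBall x r⁻¹⁻¹ ⊆ Ω := by
      rw [inv_inv]
      refine (Metric.closedBall_subset_closedBall' ?_).trans h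
      have := Metric.mem_ball.1 hx
      linarith
    exact ⟨this (Metric.mem_closedBall_self (by positivity)), this⟩
  have hlocal : ∀ x₀ ∈ Ω, ∃ u : EE d → X, ContDiff ℝ (⊤ : ℕ∞) u ∧ lap u x₀ = 0 ∧
      fs =ᶠ[nhds x₀] u := by
    intro x₀ hx₀
    obtain ⟨r, hr, hrs⟩ := hloc x₀ hx₀
    obtain ⟨u, hu, hu1, hu2⟩ := TT_local hΩ f hf hweak hr x₀ hrs (a := r⁻¹ + 1) (by linarith)
    refine ⟨u, hu, hu2 x₀ (Metric.mem_ball_self hr), ?_⟩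
    filter_upwards [Metric.ball_mem_nhds x₀ hr] with x hx
    obtain ⟨h1, h2⟩ := hin x₀ r hr hrs x hx
    rw [hu1 x hx, hfs x h1 r⁻¹ (inv_pos.2 hr) h2 (r⁻¹ + 1) (by linarith)]
  refine ⟨fs, ?_, ?_, ?_⟩
  · intro x hx
    obtain ⟨u, hu, -, he⟩ := hlocal x hx
    exact (hu.contDiffAt.congr_of_eventuallyEq he).contDiffWithinAt
  · intro x hx
    obtain ⟨u, hu, h0, he⟩ := hlocal x hx
    rw [lap_congr he, h0]
  · rw [Filter.EventuallyEq, ae_restrict_iff' hΩ.measurableSet, ae_iff]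
    apply measure_null_of_locally_null
    intro x₀ hx₀
    have hx₀ : x₀ ∈ Ω := by
      by_contra h
      exact hx₀ fun h' => absurd h' h
    obtain ⟨r, hr, hrs⟩ := hloc x₀ hx₀
    set K := Metric.closedBall x₀ (2 * r) with hKdef
    have hFi : Integrable (K.indicator f) := by
      rw [integrable_indicator_iff Metric.isClosed_closedBall.measurableSet]
      exact hf.integrableOn_compact_subset hrs (isCompact_closedBall _ _)
    have hlim := ae_lim hFi.locallyIntegrable
    refine ⟨Metric.ball x₀ r ∩ {x | ¬(x ∈ Ω → f x = fs x)}, ?_, ?_⟩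
    · rw [Set.inter_comm]
      exact inter_mem_nhdsWithin _ (Metric.ball_mem_nhds x₀ hr)
    · refine measure_mono_null ?_ (ae_iff.1 hlim)
      rintro x ⟨hx, hne⟩ hT
      apply hne
      intro hxΩ
      obtain ⟨h1, h2⟩ := hin x₀ r hr hrs x hx
      have hxr := Metric.mem_ball.1 hx
      have hxK : x ∈ K := Metric.mem_closedBall.2 (by linarith)
      rw [Set.indicator_of_mem hxK] at hT
      refine tendsto_nhds_unique hT (tendsto_const_nhds.congr' ?_)
      filter_upwards [Filter.eventually_gt_atTop r⁻¹] with a ha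
      have ha0 : 0 < a := (inv_pos.2 hr).trans ha
      rw [hfs x h1 r⁻¹ (inv_pos.2 hr) h2 a ha, TT_eq hΩ hrs f ha0 x ?_, ← integral_smul]
      · simp only [mul_smul]
      · apply Metric.closedBall_subset_closedBall'
        have := inv_anti₀ (inv_pos.2 hr) ha.le
        rw [inv_inv] at this
        linarith
end

section
/- Let Ω ⊆ ℂ be open and let f ∈ L¹_loc(Ω, ℂ) be such that u := Re f and v := Im f satisfy the Cauchy–Riemann equations in the sense of distributions, i.e. D₁u = D₂v and D₂u = −D₁v in D'(Ω): for every φ ∈ C_c^∞(Ω, ℝ), ∫_Ω u D₁φ = ∫_Ω v D₂φ and ∫_Ω u D₂φ = −∫_Ω v D₁φ. Then f has a holomorphic representative: there exists a holomorphic function f* : Ω → ℂ with f = f* almost everywhere on Ω. -/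
open MeasureTheory
open Metric Set Filter Topology ContinuousLinearMap
open scoped Convolution

lemma aux_assoc (φ ρ : ℂ → ℝ) (g : ℂ → ℂ) (hφ : Continuous φ) (hφc : HasCompactSupport φ)
    (hρ : Continuous ρ) (hρc : HasCompactSupport ρ) (hg : Integrable g) (x : ℂ) :
    ((φ ⋆[lsmul ℝ ℝ, volume] ρ) ⋆[lsmul ℝ ℝ, volume] g) x =
      (φ ⋆[lsmul ℝ ℝ, volume] (ρ ⋆[lsmul ℝ ℝ, volume] g)) x := by
  apply convolution_assoc
  · intro x y z
    simp [mul_assoc]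
  · exact hφ.aestronglyMeasurable
  · exact hρ.aestronglyMeasurable
  · exact hg.aestronglyMeasurable
  · exact Eventually.of_forall (hφc.convolutionExists_left _ hφ hρ.locallyIntegrable)
  · exact Eventually.of_forall
      (hρc.norm.convolutionExists_left _ hρ.norm hg.norm.locallyIntegrable)
  · exact hφc.norm.convolutionExists_left _ hφ.norm
      (hρc.norm.continuous_convolution_left _ hρ.norm hg.norm.locallyIntegrable).locallyIntegrable x

lemma aux_comm (φ ρ : ℂ → ℝ) (g : ℂ → ℂ) (hφ : Continuous φ) (hφc : HasCompactSupport φ)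
    (hρ : Continuous ρ) (hρc : HasCompactSupport ρ) (hg : Integrable g) (x : ℂ) :
    (φ ⋆[lsmul ℝ ℝ, volume] (ρ ⋆[lsmul ℝ ℝ, volume] g)) x =
      (ρ ⋆[lsmul ℝ ℝ, volume] (φ ⋆[lsmul ℝ ℝ, volume] g)) x := by
  rw [← aux_assoc φ ρ g hφ hφc hρ hρc hg, ← aux_assoc ρ φ g hρ hρc hφ hφc hg]
  congr 1
  rw [← convolution_flip]
  congr 1
  ext
  simp

lemma aux_radial (r : ℝ) (hr : 0 < r) : ∃ ρ : ℝ → ℝ, ContDiff ℝ (⊤ : ℕ∞) (fun z : ℂ => ρ ‖z‖) ∧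
    tsupport (fun z : ℂ => ρ ‖z‖) ⊆ closedBall 0 r ∧ ∫ z : ℂ, ρ ‖z‖ = 1 := by
  set η : ℝ → ℝ := fun s => Real.smoothTransition (r ^ 2 - s ^ 2) with hη
  have hs : ContDiff ℝ (⊤ : ℕ∞) (fun z : ℂ => η ‖z‖) :=
    Real.smoothTransition.contDiff.comp (contDiff_const.sub (contDiff_norm_sq ℝ))
  have ht : tsupport (fun z : ℂ => η ‖z‖) ⊆ closedBall 0 r := by
    apply closure_minimal _ isClosed_closedBall
    intro z hz
    rw [mem_closedBall_zero_iff]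
    by_contra! h
    apply hz
    apply Real.smoothTransition.zero_of_nonpos
    nlinarith
  have hc : HasCompactSupport (fun z : ℂ => η ‖z‖) :=
    (isCompact_closedBall (0:ℂ) r).of_isClosed_subset (isClosed_tsupport _) ht
  have hpos : 0 < ∫ z : ℂ, η ‖z‖ := by
    apply hs.continuous.integral_pos_of_hasCompactSupport_nonneg_nonzero hc (x := 0)
    · intro z
      exact Real.smoothTransition.nonneg _
    · apply ne_of_gt
      apply Real.smoothTransition.pos_of_pos
      simp; positivity
  refine ⟨fun s => (∫ z : ℂ, η ‖z‖)⁻¹ * η s, contDiff_const.mul hs, ?_, ?_⟩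
  · exact (tsupport_mul_subset_right (f := fun _ => _)).trans ht
  · rw [integral_const_mul]
    exact inv_mul_cancel₀ hpos.ne'

lemma aux_mean (h : ℂ → ℂ) (hc : Continuous h) (ρ : ℝ → ℝ) (hρ : Continuous (fun z : ℂ => ρ ‖z‖))
    (r : ℝ) (hr : 0 < r) (hs : tsupport (fun z : ℂ => ρ ‖z‖) ⊆ closedBall 0 r)
    (h1 : ∫ z : ℂ, ρ ‖z‖ = 1) (x : ℂ) (hd : ∀ z ∈ ball x r, DifferentiableAt ℂ h z) :
    ((fun z : ℂ => ρ ‖z‖) ⋆[lsmul ℝ ℝ, volume] h) x = h x := by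
  have hcs : HasCompactSupport (fun z : ℂ => ρ ‖z‖) :=
    (isCompact_closedBall (0:ℂ) r).of_isClosed_subset (isClosed_tsupport _) hs
  have hz : ∀ z : ℂ, r < ‖z‖ → ρ ‖z‖ = 0 := by
    intro z hz
    by_contra hne
    have := hs (subset_tsupport _ hne)
    rw [mem_closedBall_zero_iff] at this
    linarith
  set F : ℂ → ℂ := fun w => ρ ‖w‖ • (h (x - w) - h x) with hF
  have hFc : Continuous F := hρ.smul (by fun_prop)
  have key : ∫ w, F w = 0 := by
    rw [← Complex.integral_comp_polarCoord_symm]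
    have hG : Continuous (fun p : ℝ × ℝ => p.1 • F (Complex.polarCoord.symm p)) := by
      simp only [Complex.polarCoord_symm_apply]
      fun_prop
    have hi : IntegrableOn (fun p : ℝ × ℝ => p.1 • F (Complex.polarCoord.symm p))
        (Ioi 0 ×ˢ Ioo (-Real.pi) Real.pi) := by
      have h2 : IntegrableOn (fun p : ℝ × ℝ => p.1 • F (Complex.polarCoord.symm p))
        (Icc 0 r ×ˢ Icc (-Real.pi) Real.pi) :=
        hG.continuousOn.integrableOn_compact (isCompact_Icc.prod isCompact_Icc)
      apply h2.of_forall_sdiff_eq_zero (by measurability)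
      rintro ⟨s, θ⟩ ⟨⟨hp1, hp2⟩, hp3⟩
      have : r < s := by
        by_contra! hle
        exact hp3 ⟨⟨le_of_lt hp1, hle⟩, ⟨hp2.1.le, hp2.2.le⟩⟩
      have h3 : ρ ‖Complex.polarCoord.symm (s, θ)‖ = 0 := by
        apply hz
        rw [Complex.norm_polarCoord_symm]
        exact this.trans_le (le_abs_self _)
      simp only [hF, h3, zero_smul, smul_zero]
    have hT : Complex.polarCoord.target = Ioi 0 ×ˢ Ioo (-Real.pi) Real.pi :=
      Complex.polarCoord_target
    rw [polarCoord_target, Measure.volume_eq_prod, setIntegral_prod _ hi]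
    apply integral_eq_zero_of_ae
    filter_upwards [ae_restrict_mem measurableSet_Ioi] with s hs0
    have hs0 : 0 < s := hs0
    simp only [hF, Complex.norm_polarCoord_symm, abs_of_pos hs0, Pi.zero_apply]
    rw [integral_smul, integral_smul]
    rcases lt_or_ge r s with hrs | hrs
    · have := hz s (by simpa [abs_of_pos hs0] using hrs)
      simp only [Complex.norm_real, Real.norm_eq_abs, abs_of_pos hs0] at this
      simp [this]
    have hdc : DiffContOnCl ℂ (fun w => h w - h x) (ball x |(-s)|) := by
      rw [abs_neg, abs_of_pos hs0]
      refine ⟨fun z hz => ?_, by fun_prop⟩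
      exact ((hd z (ball_subset_ball hrs hz)).sub_const _).differentiableWithinAt
    have hm := hdc.circleAverage
    rw [Real.circleAverage_def, sub_self, smul_eq_zero] at hm
    have hm := hm.resolve_left (by positivity)
    suffices hh : ∫ θ in Ioo (-Real.pi) Real.pi,
        (h (x - Complex.polarCoord.symm (s, θ)) - h x) = 0 by
      rw [hh]; simp
    rw [← integral_Ioc_eq_integral_Ioo, ← intervalIntegral.integral_of_le (by linarith [Real.pi_pos])]
    have hper : Function.Periodic (fun θ => h (circleMap x (-s) θ) - h x) (2 * Real.pi) := by
      intro θ
      simp [periodic_circleMap x (-s) θ]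
    have h5 := hper.intervalIntegral_add_eq (-Real.pi) 0
    rw [zero_add, hm] at h5
    rw [← h5]
    have h6 : -Real.pi + 2 * Real.pi = Real.pi := by ring
    rw [h6]
    apply intervalIntegral.integral_congr
    intro θ _
    simp only [Complex.polarCoord_symm_apply, circleMap, Complex.exp_mul_I]
    congr 2
    push_cast
    ring
  rw [convolution_lsmul]
  have hi1 : Integrable (fun w : ℂ => ρ ‖w‖ • h (x - w)) :=
    (hρ.smul (by fun_prop) : Continuous (fun w : ℂ => ρ ‖w‖ • h (x - w))).integrable_of_hasCompactSupport
      hcs.smul_right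
  have hi2 : Integrable (fun w : ℂ => ρ ‖w‖ • h x) :=
    (hρ.smul (by fun_prop) : Continuous (fun w : ℂ => ρ ‖w‖ • h x)).integrable_of_hasCompactSupport
      hcs.smul_right
  simp only [hF, smul_sub] at key
  rw [integral_sub hi1 hi2, integral_smul_const, h1, one_smul] at key
  exact sub_eq_zero.1 key


lemma aux_holo {Ω : Set ℂ} (f : ℂ → ℂ)
    (hCR₁ : ∀ φ : ℂ → ℝ, ContDiff ℝ (⊤ : ℕ∞) φ → HasCompactSupport φ → tsupport φ ⊆ Ω →
      ∫ z in Ω, (f z).re * fderiv ℝ φ z 1 =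
        ∫ z in Ω, (f z).im * fderiv ℝ φ z Complex.I)
    (hCR₂ : ∀ φ : ℂ → ℝ, ContDiff ℝ (⊤ : ℕ∞) φ → HasCompactSupport φ → tsupport φ ⊆ Ω →
      ∫ z in Ω, (f z).re * fderiv ℝ φ z Complex.I =
        -∫ z in Ω, (f z).im * fderiv ℝ φ z 1)
    (c : ℂ) (r : ℝ) (hcr : closedBall c (3 * r) ⊆ Ω)
    (hg : Integrable ((closedBall c (3 * r)).indicator f))
    (φ : ℂ → ℝ) (hφ : ContDiff ℝ (⊤ : ℕ∞) φ) (hs : tsupport φ ⊆ closedBall 0 r)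
    (x : ℂ) (hx : x ∈ ball c (2 * r)) :
    DifferentiableAt ℂ (φ ⋆[lsmul ℝ ℝ, volume] ((closedBall c (3 * r)).indicator f)) x := by
  set g := (closedBall c (3 * r)).indicator f with hgdef
  have hφc : HasCompactSupport φ :=
    (isCompact_closedBall (0:ℂ) r).of_isClosed_subset (isClosed_tsupport _) hs
  have hD := hφc.hasFDerivAt_convolution_left (lsmul ℝ ℝ) (hφ.of_le (by norm_cast))
    hg.locallyIntegrable x
  have hcd : Continuous (fderiv ℝ φ) := hφ.continuous_fderiv (by simp)
  have hintg := ((hφc.fderiv ℝ).convolutionExists_left ((lsmul ℝ ℝ : ℝ →L[ℝ] ℂ →L[ℝ] ℂ).precompL ℂ) hcd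
    hg.locallyIntegrable x).integrable_swap
  set χ : ℂ → ℝ := fun t => φ (x - t) with hχ
  have hχs : ContDiff ℝ (⊤ : ℕ∞) χ := hφ.comp (contDiff_const.sub contDiff_id)
  have hχt : tsupport χ ⊆ closedBall c (3 * r) := by
    apply closure_minimal _ isClosed_closedBall
    intro t ht
    have h1 : x - t ∈ tsupport φ := subset_tsupport _ ht
    have h2 := hs h1
    rw [mem_closedBall_zero_iff] at h2
    rw [mem_ball, dist_eq_norm] at hx
    rw [mem_closedBall, dist_eq_norm]
    calc ‖t - c‖ = ‖(x - c) - (x - t)‖ := by ring_nf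
      _ ≤ ‖x - c‖ + ‖x - t‖ := norm_sub_le _ _
      _ ≤ 3 * r := by linarith
  have hχc : HasCompactSupport χ :=
    (isCompact_closedBall c (3 * r)).of_isClosed_subset (isClosed_tsupport _) hχt
  have hχd : ∀ t v, fderiv ℝ χ t v = - fderiv ℝ φ (x - t) v := by
    intro t v
    have := ((hφ.differentiable (by simp)) (x - t)).hasFDerivAt.comp t
      ((hasFDerivAt_id (𝕜 := ℝ) t).const_sub x)
    have h2 : HasFDerivAt χ _ t := this
    rw [h2.fderiv]
    simp
  have hpt : ∀ t v, (fderiv ℝ χ t v) • f t = - (fderiv ℝ φ (x - t) v • g t) := by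
    intro t v
    rw [hχd, neg_smul]
    by_cases ht : t ∈ closedBall c (3 * r)
    · rw [hgdef, indicator_of_mem ht]
    · have h0 : fderiv ℝ χ t = 0 := by
        by_contra hne
        exact ht (hχt (support_fderiv_subset ℝ hne))
      have h1 := hχd t v
      rw [h0] at h1
      have h2 : fderiv ℝ φ (x - t) v = 0 := by simpa using h1.symm
      simp [h2]
  have hintv : ∀ v, Integrable (fun t => fderiv ℝ φ (x - t) v • g t) := by
    intro v
    exact hintg.apply_continuousLinearMap v
  have hval : ∀ v, ((fderiv ℝ φ ⋆[(lsmul ℝ ℝ : ℝ →L[ℝ] ℂ →L[ℝ] ℂ).precompL ℂ, volume] g) x) v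
      = -∫ t in Ω, (fderiv ℝ χ t v) • f t := by
    intro v
    rw [convolution_eq_swap, ContinuousLinearMap.integral_apply hintg]
    rw [setIntegral_eq_integral_of_forall_compl_eq_zero]
    · simp_rw [hpt]
      rw [integral_neg, neg_neg]
      rfl
    · intro t ht
      have hnt : t ∉ closedBall c (3 * r) := fun h => ht (hcr h)
      rw [hpt, hgdef, indicator_of_notMem hnt]
      simp
  have hIG : ∀ v, IntegrableOn (fun t => (fderiv ℝ χ t v) • f t) Ω := by
    intro v
    simp_rw [hpt]
    exact (hintv v).neg.integrableOn
  have hre : ∀ v, (∫ t in Ω, (fderiv ℝ χ t v) • f t).re = ∫ t in Ω, (f t).re * fderiv ℝ χ t v := by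
    intro v
    have := Complex.reCLM.integral_comp_comm (hIG v)
    simp only [Complex.reCLM_apply] at this
    rw [← this]
    congr 1
    ext t
    simp [mul_comm]
  have him : ∀ v, (∫ t in Ω, (fderiv ℝ χ t v) • f t).im = ∫ t in Ω, (f t).im * fderiv ℝ χ t v := by
    intro v
    have := Complex.imCLM.integral_comp_comm (hIG v)
    simp only [Complex.imCLM_apply] at this
    rw [← this]
    congr 1
    ext t
    simp [mul_comm]
  have e1 := hCR₁ χ hχs hχc (hχt.trans hcr)
  have e2 := hCR₂ χ hχs hχc (hχt.trans hcr)
  rw [← hre, ← him] at e1 e2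
  rw [differentiableAt_complex_iff_differentiableAt_real]
  refine ⟨hD.differentiableAt, ?_⟩
  rw [hD.fderiv, hval, hval]
  apply Complex.ext
  · simp only [Complex.neg_re, Complex.neg_im, smul_eq_mul, Complex.mul_re, Complex.I_re,
      Complex.I_im, e2]
    ring
  · simp only [Complex.neg_re, Complex.neg_im, smul_eq_mul, Complex.mul_im, Complex.I_re,
      Complex.I_im, e1]
    ring

lemma aux_local {Ω : Set ℂ} (hΩ : IsOpen Ω) (f : ℂ → ℂ) (hf : LocallyIntegrableOn f Ω)
    (hCR₁ : ∀ φ : ℂ → ℝ, ContDiff ℝ (⊤ : ℕ∞) φ → HasCompactSupport φ → tsupport φ ⊆ Ω →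
      ∫ z in Ω, (f z).re * fderiv ℝ φ z 1 =
        ∫ z in Ω, (f z).im * fderiv ℝ φ z Complex.I)
    (hCR₂ : ∀ φ : ℂ → ℝ, ContDiff ℝ (⊤ : ℕ∞) φ → HasCompactSupport φ → tsupport φ ⊆ Ω →
      ∫ z in Ω, (f z).re * fderiv ℝ φ z Complex.I =
        -∫ z in Ω, (f z).im * fderiv ℝ φ z 1)
    (c : ℂ) (hc : c ∈ Ω) :
    ∃ r > 0, ∃ F : ℂ → ℂ, (∀ z ∈ ball c r, DifferentiableAt ℂ F z) ∧
      f =ᵐ[volume.restrict (ball c r)] F := by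
  obtain ⟨R, hR, hRs⟩ := Metric.nhds_basis_closedBall.mem_iff.1 (hΩ.mem_nhds hc)
  obtain ⟨r, hr, rfl⟩ : ∃ r, 0 < r ∧ R = 3 * r := ⟨R / 3, by positivity, by ring⟩
  have hg : Integrable ((closedBall c (3 * r)).indicator f) :=
    (integrable_indicator_iff measurableSet_closedBall).2
      (hf.integrableOn_compact_subset hRs (isCompact_closedBall _ _))
  obtain ⟨ρ, hρ, hρs, hρ1⟩ := aux_radial r hr
  have hρc : HasCompactSupport (fun z : ℂ => ρ ‖z‖) :=
    (isCompact_closedBall (0:ℂ) r).of_isClosed_subset (isClosed_tsupport _) hρs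
  have hA := aux_holo f hCR₁ hCR₂ c r hRs hg
  set g := (closedBall c (3 * r)).indicator f with hgdef
  refine ⟨r, hr, (fun z : ℂ => ρ ‖z‖) ⋆[lsmul ℝ ℝ, volume] g, ?_, ?_⟩
  · intro z hz
    exact hA _ hρ hρs z (ball_subset_ball (by linarith) hz)
  let φ : ℕ → ContDiffBump (0 : ℂ) := fun n =>
    ⟨r / (n + 1) / 2, r / (n + 1), by positivity, half_lt_self (by positivity)⟩
  have hφ0 : Tendsto (fun n => (φ n).rOut) atTop (𝓝 0) :=
    tendsto_const_div_atTop_nhds_zero_nat r |>.comp (tendsto_add_atTop_nat 1) |>.congr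
      (by intro n; simp [φ])
  have hae := ContDiffBump.ae_convolution_tendsto_right_of_locallyIntegrable (K := 2) hφ0
    (Eventually.of_forall fun n => by simp only [φ]; linarith) hg.locallyIntegrable
  rw [Filter.EventuallyEq, ae_restrict_iff' measurableSet_ball]
  filter_upwards [hae] with x hx hxb
  have hgx : g x = f x := by
    rw [hgdef, indicator_of_mem]
    exact ball_subset_closedBall (ball_subset_ball (by linarith) hxb)
  rw [← hgx]
  have hcont : Continuous ((fun z : ℂ => ρ ‖z‖) ⋆[lsmul ℝ ℝ, volume] g) :=
    hρc.continuous_convolution_left _ hρ.continuous hg.locallyIntegrable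
  have hx2 := ContDiffBump.convolution_tendsto_right_of_continuous (μ := volume) hφ0 hcont x
  refine tendsto_nhds_unique hx (hx2.congr fun n => ?_)
  have hsm : ContDiff ℝ (⊤ : ℕ∞) ((φ n).normed volume) := (φ n).contDiff_normed
  have hcs : HasCompactSupport ((φ n).normed volume) := (φ n).hasCompactSupport_normed
  rw [aux_comm _ _ _ hsm.continuous hcs hρ.continuous hρc hg]
  apply aux_mean _ (hcs.continuous_convolution_left _ hsm.continuous hg.locallyIntegrable) ρ
    hρ.continuous r hr hρs hρ1
  intro z hz
  apply hA _ hsm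
  · rw [(φ n).tsupport_normed_eq]
    apply closedBall_subset_closedBall
    exact div_le_self hr.le (by linarith [(Nat.cast_nonneg n : (0:ℝ) ≤ n)])
  · rw [mem_ball] at *
    linarith [dist_triangle z x c]


/-- If `f ∈ L¹_loc(Ω, ℂ)` (Ω ⊆ ℂ open) satisfies the Cauchy–Riemann
equations `D₁u = D₂v`, `D₂u = -D₁v` (u = Re f, v = Im f) in the sense of distributions,
then `f` has a holomorphic representative. -/
theorem distributional_CR_implies_holomorphic_representative
    {Ω : Set ℂ} (hΩ : IsOpen Ω) (f : ℂ → ℂ) (hf : LocallyIntegrableOn f Ω)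
    (hCR₁ : ∀ φ : ℂ → ℝ, ContDiff ℝ (⊤ : ℕ∞) φ → HasCompactSupport φ → tsupport φ ⊆ Ω →
      ∫ z in Ω, (f z).re * fderiv ℝ φ z 1 =
        ∫ z in Ω, (f z).im * fderiv ℝ φ z Complex.I)
    (hCR₂ : ∀ φ : ℂ → ℝ, ContDiff ℝ (⊤ : ℕ∞) φ → HasCompactSupport φ → tsupport φ ⊆ Ω →
      ∫ z in Ω, (f z).re * fderiv ℝ φ z Complex.I =
        -∫ z in Ω, (f z).im * fderiv ℝ φ z 1) :
    ∃ fstar : ℂ → ℂ, (∀ z ∈ Ω, DifferentiableAt ℂ fstar z) ∧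
      f =ᵐ[volume.restrict Ω] fstar := by
  choose! r hr F hFd hFe using aux_local hΩ f hf hCR₁ hCR₂
  have key : ∀ c ∈ Ω, ∀ z ∈ ball c (r c), z ∈ Ω → F z z = F c z := by
    intro c hc z hz hzΩ
    have hU : IsOpen (ball z (r z) ∩ ball c (r c)) := isOpen_ball.inter isOpen_ball
    have h1 := ae_restrict_of_ae_restrict_of_subset
      (inter_subset_left (t := ball c (r c))) (hFe z hzΩ)
    have h2 := ae_restrict_of_ae_restrict_of_subset
      (inter_subset_right (s := ball z (r z))) (hFe c hc)
    have h3 : F z =ᵐ[volume.restrict (ball z (r z) ∩ ball c (r c))] F c := by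
      filter_upwards [h1, h2] with w hw1 hw2
      rw [← hw1, ← hw2]
    refine Measure.eqOn_open_of_ae_eq h3 hU ?_ ?_ ⟨mem_ball_self (hr z hzΩ), hz⟩
    · exact fun w hw => (hFd z hzΩ w hw.1).continuousAt.continuousWithinAt
    · exact fun w hw => (hFd c hc w hw.2).continuousAt.continuousWithinAt
  refine ⟨fun z => F z z, ?_, ?_⟩
  · intro c hc
    apply (hFd c hc c (mem_ball_self (hr c hc))).congr_of_eventuallyEq
    filter_upwards [ball_mem_nhds c (hr c hc), hΩ.mem_nhds hc] with z hz hzΩ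
    exact key c hc z hz hzΩ
  · rw [Filter.EventuallyEq, ae_restrict_iff' hΩ.measurableSet, ae_iff]
    apply measure_null_of_locally_null
    intro c hc
    simp only [mem_ofPred_eq, Classical.not_imp] at hc
    have hc := hc.1
    refine ⟨{a | ¬(a ∈ Ω → f a = F a a)} ∩ ball c (r c),
      inter_mem self_mem_nhdsWithin (mem_nhdsWithin_of_mem_nhds (ball_mem_nhds c (hr c hc))), ?_⟩
    have h := hFe c hc
    rw [Filter.EventuallyEq, ae_restrict_iff' measurableSet_ball, ae_iff] at h
    refine measure_mono_null ?_ h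
    rintro a ⟨ha, hab⟩
    simp only [mem_ofPred_eq, Classical.not_imp] at ha ⊢
    exact ⟨hab, by rw [← key c hc a hab ha.1]; exact ha.2⟩
end

section
/- Let Ω ⊆ ℂ be open, let X be a complex Banach space, and let f ∈ L¹_loc(Ω, X). Suppose f satisfies the Cauchy–Riemann equations very weakly distributionally: there exists a separating set W ⊆ X' such that for every x' ∈ W, the functions u := Re⟨f, x'⟩ and v := Im⟨f, x'⟩ satisfy D₁u = D₂v and D₂u = −D₁v in the sense of distributions on Ω. Then f has a holomorphic representative: there exists a holomorphic function f* : Ω → X with f = f* almost everywhere on Ω. -/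
open MeasureTheory

namespace VeryWeakCR

open Metric Set Filter Topology ContinuousLinearMap
open scoped Convolution

/-- A continuous function supported in a compact subset of `Ω` times `f` is integrable. -/
lemma integrable_smul {X : Type*} [NormedAddCommGroup X] [NormedSpace ℂ X]
    {Ω : Set ℂ} {f : ℂ → X} (hf : LocallyIntegrableOn f Ω) {φ : ℂ → ℝ}
    (hφ : Continuous φ) {K : Set ℂ} (hK : IsCompact K) (hKΩ : K ⊆ Ω)
    (hs : ∀ z, z ∉ K → φ z = 0) : Integrable (fun z => φ z • f z) := by
  have h1 : IntegrableOn (fun z => φ z • f z) K :=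
    (hf.integrableOn_compact_subset hKΩ hK).continuousOn_smul hφ.continuousOn hK
  refine (integrableOn_iff_integrable_of_support_subset ?_).1 h1
  intro z hz
  by_contra h
  exact hz (by simp [hs z h])

lemma fderiv_zero_off {φ : ℂ → ℝ} (v : ℂ) : ∀ z, z ∉ tsupport φ → fderiv ℝ φ z v = 0 := by
  intro z hz
  have : fderiv ℝ φ z = 0 := by
    by_contra h
    exact hz (support_fderiv_subset ℝ h)
  simp [this]

lemma continuous_fderiv_v {φ : ℂ → ℝ} (h : ContDiff ℝ (⊤ : ℕ∞) φ) (v : ℂ) :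
    Continuous (fun z => fderiv ℝ φ z v) :=
  (h.continuous_fderiv (by simp)).clm_apply continuous_const

/-- The vector-valued distributional Cauchy-Riemann equation. -/
lemma weak_dbar {X : Type*} [NormedAddCommGroup X] [NormedSpace ℂ X] [CompleteSpace X]
    {Ω : Set ℂ} (f : ℂ → X) (hf : LocallyIntegrableOn f Ω)
    (W : Set (X →L[ℂ] ℂ)) (hW : ∀ x : X, (∀ x' ∈ W, x' x = 0) → x = 0)
    (hCR₁ : ∀ x' ∈ W, ∀ φ : ℂ → ℝ, ContDiff ℝ (⊤ : ℕ∞) φ → HasCompactSupport φ →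
      tsupport φ ⊆ Ω →
      ∫ z in Ω, (x' (f z)).re * fderiv ℝ φ z 1 =
        ∫ z in Ω, (x' (f z)).im * fderiv ℝ φ z Complex.I)
    (hCR₂ : ∀ x' ∈ W, ∀ φ : ℂ → ℝ, ContDiff ℝ (⊤ : ℕ∞) φ → HasCompactSupport φ →
      tsupport φ ⊆ Ω →
      ∫ z in Ω, (x' (f z)).re * fderiv ℝ φ z Complex.I =
        -∫ z in Ω, (x' (f z)).im * fderiv ℝ φ z 1)
    (φ : ℂ → ℝ) (h1 : ContDiff ℝ (⊤ : ℕ∞) φ) (h2 : HasCompactSupport φ) (h3 : tsupport φ ⊆ Ω) :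
    (∫ z in Ω, fderiv ℝ φ z 1 • f z) + Complex.I • ∫ z in Ω, fderiv ℝ φ z Complex.I • f z = 0 := by
  have hi : ∀ v, Integrable (fun z => fderiv ℝ φ z v • f z) (volume.restrict Ω) := fun v =>
    (integrable_smul hf (continuous_fderiv_v h1 v) h2 h3 (fderiv_zero_off v)).integrableOn
  apply hW
  intro x' hx'
  have key : ∀ v, x' (∫ z in Ω, fderiv ℝ φ z v • f z) =
      ((∫ z in Ω, (x' (f z)).re * fderiv ℝ φ z v : ℝ) : ℂ) +
      ((∫ z in Ω, (x' (f z)).im * fderiv ℝ φ z v : ℝ) : ℂ) * Complex.I := by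
    intro v
    have e := x'.integral_comp_comm (hi v)
    have hi' := x'.integrable_comp (hi v)
    rw [← e]
    apply Complex.ext
    · have := Complex.reCLM.integral_comp_comm hi'
      simp only [Complex.reCLM_apply] at this
      rw [← this]
      simp [mul_comm]
    · have := Complex.imCLM.integral_comp_comm hi'
      simp only [Complex.imCLM_apply] at this
      rw [← this]
      simp [mul_comm]
  rw [map_add, map_smul, key, key, hCR₁ x' hx' φ h1 h2 h3, hCR₂ x' hx' φ h1 h2 h3]
  push_cast
  simp only [smul_eq_mul]
  ring_nf
  simp

section loc

variable {X : Type*} [NormedAddCommGroup X] [NormedSpace ℂ X] [CompleteSpace X]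

set_option linter.unusedSectionVars false

/-- Mollifications of a weakly holomorphic function are holomorphic. -/
lemma conv_holo {g : ℂ → X} (hg : Integrable g) {z₀ : ℂ} {r : ℝ}
    (hd : ∀ φ : ℂ → ℝ, ContDiff ℝ (⊤ : ℕ∞) φ → HasCompactSupport φ →
      tsupport φ ⊆ closedBall z₀ (3 * r) →
      (∫ z, fderiv ℝ φ z 1 • g z) + Complex.I • ∫ z, fderiv ℝ φ z Complex.I • g z = 0)
    {k : ℂ → ℝ} (hk : ContDiff ℝ (⊤ : ℕ∞) k) (hks : tsupport k ⊆ closedBall 0 r)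
    {z : ℂ} (hz : z ∈ ball z₀ (2 * r)) :
    DifferentiableAt ℂ (k ⋆[lsmul ℝ ℝ, volume] g) z := by
  have hkc : HasCompactSupport k := (isCompact_closedBall _ _).of_isClosed_subset
    (isClosed_tsupport _) hks
  have hk1 : ContDiff ℝ 1 k := hk.of_le (by norm_cast)
  have hD := hkc.hasFDerivAt_convolution_left (lsmul ℝ ℝ) hk1 (hg.locallyIntegrable) z
  rw [differentiableAt_complex_iff_differentiableAt_real]
  refine ⟨hD.differentiableAt, ?_⟩
  rw [hD.fderiv]
  let φ : ℂ → ℝ := fun s => k (z - s)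
  have hφ : ContDiff ℝ (⊤ : ℕ∞) φ := hk.comp (contDiff_const.sub contDiff_id)
  have hφs : tsupport φ ⊆ closedBall z r := by
    refine closure_minimal ?_ isClosed_closedBall
    intro s hs
    have : z - s ∈ closedBall (0:ℂ) r := hks (subset_tsupport _ hs)
    simpa [dist_eq_norm, norm_sub_rev] using this
  have hφc : HasCompactSupport φ := (isCompact_closedBall _ _).of_isClosed_subset
    (isClosed_tsupport _) hφs
  have hfd : ∀ s v, fderiv ℝ φ s v = - fderiv ℝ k (z - s) v := by
    intro s v
    have a : HasFDerivAt (fun s => z - s) (-(ContinuousLinearMap.id ℝ ℂ)) s := by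
      simpa using (hasFDerivAt_id (𝕜 := ℝ) s).const_sub z
    have b : HasFDerivAt k (fderiv ℝ k (z - s)) (z - s) :=
      (hk1.differentiable (by simp) _).hasFDerivAt
    have := (b.comp s a).fderiv
    change fderiv ℝ (k ∘ fun s => z - s) s v = _
    rw [this]
    simp
  have hv : ∀ v, ((fderiv ℝ k ⋆[(lsmul ℝ ℝ : ℝ →L[ℝ] X →L[ℝ] X).precompL ℂ, volume] g) z) v
      = - ∫ s, fderiv ℝ φ s v • g s := by
    intro v
    have hex : ConvolutionExistsAt (fderiv ℝ k) g z
        ((lsmul ℝ ℝ : ℝ →L[ℝ] X →L[ℝ] X).precompL ℂ) volume :=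
      (hkc.fderiv ℝ).convolutionExists_left _ (hk.continuous_fderiv (by simp))
        hg.locallyIntegrable z
    rw [convolution_def, ContinuousLinearMap.integral_apply hex,
      ← integral_sub_left_eq_self _ volume z, ← integral_neg]
    congr 1
    ext s
    simp [hfd, ContinuousLinearMap.precompL_apply]
  have hh := hd φ hφ hφc (hφs.trans (closedBall_subset_closedBall' (by
    have := mem_ball.1 hz; linarith)))
  rw [hv, hv]
  have h2 := congrArg (fun x => Complex.I • x) hh
  simp only [smul_add, smul_smul, Complex.I_mul_I, smul_zero, neg_smul, one_smul] at h2
  rw [smul_neg, neg_eq_iff_add_eq_zero.2 ?_]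
  exact (neg_eq_zero.1 (by rw [← h2]; abel))

/-- Mean value property for radial kernels. -/
lemma radial_mean {h : ℂ → X} (hc : Continuous h) {z : ℂ} {r : ℝ} {ρ : ℂ → ℝ}
    (hρ : Continuous ρ) (hρs : tsupport ρ ⊆ closedBall 0 r)
    (hrad : ∀ a w : ℂ, ‖a‖ = 1 → ρ (a * w) = ρ w)
    (hh : ∀ w ∈ closedBall z r, DifferentiableAt ℂ h w) :
    (ρ ⋆[lsmul ℝ ℝ, volume] h) z = (∫ w, ρ w) • h z := by
  have hρc : HasCompactSupport ρ := (isCompact_closedBall _ _).of_isClosed_subset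
    (isClosed_tsupport _) hρs
  have e1 : ∀ θ : ℝ, (ρ ⋆[lsmul ℝ ℝ, volume] h) z
      = ∫ w, ρ w • h (z - circleMap 0 1 θ * w) := by
    intro θ
    have hmp := (rotation (Circle.exp θ)).measurePreserving
    have := hmp.integral_comp (rotation (Circle.exp θ)).toHomeomorph.measurableEmbedding
      (fun w => ρ w • h (z - w))
    rw [convolution_def]
    simp only [lsmul_apply]
    rw [← this]
    congr 1
    ext w
    rw [rotation_apply, hrad _ _ (by simp)]
    simp [circleMap]
  have hint : Integrable (Function.uncurry fun (θ : ℝ) (w : ℂ) =>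
      ρ w • h (z - circleMap 0 1 θ * w))
      ((volume.restrict (Set.uIoc 0 (2 * Real.pi))).prod volume) := by
    have hcont : Continuous (Function.uncurry fun (θ : ℝ) (w : ℂ) =>
        ρ w • h (z - circleMap 0 1 θ * w)) := by
      have := continuous_circleMap (0:ℂ) 1
      unfold Function.uncurry
      fun_prop
    have hI : IntegrableOn (Function.uncurry fun (θ : ℝ) (w : ℂ) =>
        ρ w • h (z - circleMap 0 1 θ * w))
        (Set.uIcc 0 (2 * Real.pi) ×ˢ closedBall (0:ℂ) r) (volume.prod volume) :=
      hcont.continuousOn.integrableOn_compact (isCompact_uIcc.prod (isCompact_closedBall _ _))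
    have hI2 := hI.mono_set (Set.prod_mono_left (t := closedBall (0:ℂ) r) Set.uIoc_subset_uIcc)
    have hI3 : IntegrableOn (Function.uncurry fun (θ : ℝ) (w : ℂ) =>
        ρ w • h (z - circleMap 0 1 θ * w)) (Set.uIoc 0 (2 * Real.pi) ×ˢ Set.univ)
        (volume.prod volume) := by
      refine hI2.of_forall_sdiff_eq_zero (measurableSet_uIoc.prod MeasurableSet.univ) ?_
      rintro ⟨θ, w⟩ ⟨h1, h2⟩
      have : ρ w = 0 := by
        by_contra h0
        exact h2 ⟨h1.1, hρs (subset_tsupport _ h0)⟩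
      simp [Function.uncurry, this]
    have := Measure.prod_restrict (μ := (volume : Measure ℝ)) (ν := (volume : Measure ℂ))
      (Set.uIoc 0 (2 * Real.pi)) Set.univ
    rw [Measure.restrict_univ] at this
    rw [this]
    exact hI3
  have e2 := intervalIntegral_integral_swap hint
  simp_rw [← e1] at e2
  rw [intervalIntegral.integral_const] at e2
  have e3 : ∀ w, ∫ θ in (0:ℝ)..(2 * Real.pi), ρ w • h (z - circleMap 0 1 θ * w)
      = (2 * Real.pi) • (ρ w • h z) := by
    intro w
    by_cases hw : ρ w = 0
    · simp [hw]
    have hwr : ‖w‖ ≤ r := by simpa using hρs (subset_tsupport _ hw)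
    have := circleAverage_of_differentiable_on_off_countable
      (f := fun ζ => h (z - ζ * w)) (c := 0) (R := 1) (s := ∅) Set.countable_empty
      (by fun_prop) (by
        intro ζ hζ
        have hζ' : ‖ζ‖ ≤ 1 := by
          have := hζ.1
          simp at this
          exact this.le
        have hd := hh (z - ζ * w) (by
          simp
          nlinarith [norm_nonneg w, norm_nonneg ζ])
        exact hd.comp ζ (f := fun ζ => z - ζ * w) (by fun_prop))
    rw [Real.circleAverage_def] at this
    simp only [zero_mul, sub_zero] at this
    rw [intervalIntegral.integral_smul, ← this, smul_comm (2 * Real.pi), smul_smul (2 * Real.pi),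
      mul_inv_cancel₀ (by positivity), one_smul]
  simp_rw [e3] at e2
  rw [integral_smul, integral_smul_const, sub_zero] at e2
  exact smul_right_injective X (by positivity : (2 * Real.pi) ≠ 0) e2

/-- A radial smooth kernel. -/
lemma exists_radial {r : ℝ} (hr : 0 < r) : ∃ ρ : ℂ → ℝ, ContDiff ℝ (⊤ : ℕ∞) ρ ∧
    tsupport ρ ⊆ closedBall 0 r ∧ (∀ a w : ℂ, ‖a‖ = 1 → ρ (a * w) = ρ w) ∧ 0 < ∫ w, ρ w := by
  let b : ContDiffBump (0:ℝ) := ⟨r ^ 2 / 2, r ^ 2, by positivity, by nlinarith [sq_pos_of_pos hr]⟩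
  have hsm : ContDiff ℝ (⊤ : ℕ∞) (fun w : ℂ => b (‖w‖ ^ 2)) :=
    b.contDiff.comp (contDiff_norm_sq ℝ)
  have hs : tsupport (fun w : ℂ => b (‖w‖ ^ 2)) ⊆ closedBall 0 r := by
    refine closure_minimal ?_ isClosed_closedBall
    intro w hw
    have : ‖w‖ ^ 2 ∈ Function.support b := hw
    rw [b.support_eq] at this
    simp only [mem_ball, dist_zero_right, norm_pow, norm_norm] at this
    have h2 : ‖w‖ ^ 2 < r ^ 2 := this
    simpa using (abs_lt_of_sq_lt_sq h2 hr.le).le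
  refine ⟨fun w => b (‖w‖ ^ 2), hsm, hs, ?_, ?_⟩
  · intro a w ha
    simp [ha]
  · refine Continuous.integral_pos_of_hasCompactSupport_nonneg_nonzero (x := 0) hsm.continuous
      ((isCompact_closedBall _ _).of_isClosed_subset (isClosed_tsupport _) hs)
      (fun w => b.nonneg) ?_
    have : b 0 = 1 := b.one_of_mem_closedBall (by simp; positivity)
    simp [this]

/-- Commutation of convolutions. -/
lemma conv_comm {g : ℂ → X} (hg : Integrable g) {a b : ℂ → ℝ} (ha : Continuous a)
    (hac : HasCompactSupport a) (hb : Continuous b) (hbc : HasCompactSupport b) (z : ℂ) :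
    (a ⋆[lsmul ℝ ℝ, volume] (b ⋆[lsmul ℝ ℝ, volume] g)) z =
      (b ⋆[lsmul ℝ ℝ, volume] (a ⋆[lsmul ℝ ℝ, volume] g)) z := by
  have assoc : ∀ {a b : ℂ → ℝ}, Continuous a → HasCompactSupport a → Continuous b →
      HasCompactSupport b → ((a ⋆[lsmul ℝ ℝ, volume] b) ⋆[lsmul ℝ ℝ, volume] g) z =
        (a ⋆[lsmul ℝ ℝ, volume] (b ⋆[lsmul ℝ ℝ, volume] g)) z := by
    intro a b ha hac hb hbc
    refine convolution_assoc _ _ _ _ (fun x y z => by simp [smul_smul, mul_comm]) ha.aestronglyMeasurable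
      hb.aestronglyMeasurable hg.aestronglyMeasurable ?_ ?_ ?_
    · exact Eventually.of_forall (hac.convolutionExists_left _ ha hb.locallyIntegrable)
    · exact Eventually.of_forall (hbc.norm.convolutionExists_left _ hb.norm
        hg.norm.locallyIntegrable)
    · exact hac.norm.convolutionExists_left _ ha.norm
        (hbc.norm.continuous_convolution_left _ hb.norm
          hg.norm.locallyIntegrable).locallyIntegrable z
  rw [← assoc ha hac hb hbc, ← assoc hb hbc ha hac]
  congr 1
  rw [← convolution_flip]
  congr 1
  ext
  simp

/-- Local holomorphic representative. -/
lemma local_rep {g : ℂ → X} (hg : Integrable g) {z₀ : ℂ} {r : ℝ} (hr : 0 < r)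
    (hd : ∀ φ : ℂ → ℝ, ContDiff ℝ (⊤ : ℕ∞) φ → HasCompactSupport φ →
      tsupport φ ⊆ closedBall z₀ (3 * r) →
      (∫ z, fderiv ℝ φ z 1 • g z) + Complex.I • ∫ z, fderiv ℝ φ z Complex.I • g z = 0) :
    ∃ h : ℂ → X, (∀ z ∈ ball z₀ r, DifferentiableAt ℂ h z) ∧
      ∀ᵐ z, z ∈ ball z₀ r → g z = h z := by
  obtain ⟨ρ, hρ, hρs, hrad, hpos⟩ := exists_radial hr
  have hρc : HasCompactSupport ρ := (isCompact_closedBall _ _).of_isClosed_subset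
    (isClosed_tsupport _) hρs
  refine ⟨fun z => ((∫ w, ρ w : ℝ) : ℂ)⁻¹ • (ρ ⋆[lsmul ℝ ℝ, volume] g) z, ?_, ?_⟩
  · intro z hz
    exact (conv_holo hg hd hρ hρs (ball_subset_ball (by linarith) hz)).const_smul _
  let φ : ℕ → ContDiffBump (0:ℂ) := fun n =>
    ⟨r / (n + 1) / 2, r / (n + 1), by positivity, half_lt_self (by positivity)⟩
  have hφ0 : Tendsto (fun n => (φ n).rOut) atTop (𝓝 0) := by
    have := tendsto_one_div_add_atTop_nhds_zero_nat (𝕜 := ℝ)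
    have := this.const_mul r
    simpa [φ, div_eq_mul_inv] using this
  have hae := ContDiffBump.ae_convolution_tendsto_right_of_locallyIntegrable (μ := volume)
    (K := 2) hφ0 (Eventually.of_forall fun n => by simp only [φ]; linarith)
    hg.locallyIntegrable
  filter_upwards [hae] with z hz hzb
  have hρg : Continuous (ρ ⋆[lsmul ℝ ℝ, volume] g) :=
    hρc.continuous_convolution_left _ hρ.continuous hg.locallyIntegrable
  have t2 := ContDiffBump.convolution_tendsto_right_of_continuous (μ := volume) hφ0 hρg z
  have heq : ∀ n, ((φ n).normed volume ⋆[lsmul ℝ ℝ, volume] (ρ ⋆[lsmul ℝ ℝ, volume] g)) z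
      = (∫ w, ρ w) • ((φ n).normed volume ⋆[lsmul ℝ ℝ, volume] g) z := by
    intro n
    have hns : tsupport ((φ n).normed volume) ⊆ closedBall 0 r := by
      rw [(φ n).tsupport_normed_eq]
      refine closedBall_subset_closedBall ?_
      exact div_le_self hr.le (by linarith [Nat.cast_nonneg (α := ℝ) n])
    rw [conv_comm hg (φ n).continuous_normed (φ n).hasCompactSupport_normed hρ.continuous hρc]
    refine radial_mean ?_ hρ.continuous hρs hrad ?_
    · exact (φ n).hasCompactSupport_normed.continuous_convolution_left _ (φ n).continuous_normed
        hg.locallyIntegrable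
    · intro w hw
      refine conv_holo hg hd (φ n).contDiff_normed hns ?_
      rw [mem_ball] at *
      rw [mem_closedBall] at hw
      linarith [dist_triangle w z z₀]
  simp_rw [heq] at t2
  have := tendsto_nhds_unique t2 (hz.const_smul (∫ w, ρ w))
  rw [this, ← Complex.coe_smul, smul_smul, inv_mul_cancel₀ (by exact_mod_cast hpos.ne'), one_smul]

end loc

end VeryWeakCR

/-- If `f ∈ L¹_loc(Ω, X)` (Ω ⊆ ℂ open, X a complex Banach space)
satisfies the Cauchy–Riemann equations very weakly distributionally — i.e. there is a
separating set `W ⊆ X'` such that for every `x' ∈ W` the functions `u = Re⟨f, x'⟩`,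
`v = Im⟨f, x'⟩` satisfy `D₁u = D₂v`, `D₂u = -D₁v` distributionally — then `f` has a
holomorphic representative. -/
theorem very_weak_distributional_CR_implies_holomorphic_representative
    {X : Type*} [NormedAddCommGroup X] [NormedSpace ℂ X] [CompleteSpace X]
    {Ω : Set ℂ} (hΩ : IsOpen Ω) (f : ℂ → X) (hf : LocallyIntegrableOn f Ω)
    (W : Set (X →L[ℂ] ℂ)) (hW : ∀ x : X, (∀ x' ∈ W, x' x = 0) → x = 0)
    (hCR₁ : ∀ x' ∈ W, ∀ φ : ℂ → ℝ, ContDiff ℝ (⊤ : ℕ∞) φ → HasCompactSupport φ →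
      tsupport φ ⊆ Ω →
      ∫ z in Ω, (x' (f z)).re * fderiv ℝ φ z 1 =
        ∫ z in Ω, (x' (f z)).im * fderiv ℝ φ z Complex.I)
    (hCR₂ : ∀ x' ∈ W, ∀ φ : ℂ → ℝ, ContDiff ℝ (⊤ : ℕ∞) φ → HasCompactSupport φ →
      tsupport φ ⊆ Ω →
      ∫ z in Ω, (x' (f z)).re * fderiv ℝ φ z Complex.I =
        -∫ z in Ω, (x' (f z)).im * fderiv ℝ φ z 1) :
    ∃ fstar : ℂ → X, (∀ z ∈ Ω, DifferentiableAt ℂ fstar z) ∧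
      f =ᵐ[volume.restrict Ω] fstar := by
  have hloc : ∀ z ∈ Ω, ∃ r > 0, ∃ h : ℂ → X, Metric.ball z r ⊆ Ω ∧
      (∀ w ∈ Metric.ball z r, DifferentiableAt ℂ h w) ∧
      ∀ᵐ w, w ∈ Metric.ball z r → f w = h w := by
    intro z hz
    obtain ⟨ε, hε, hεΩ⟩ := Metric.nhds_basis_closedBall.mem_iff.1 (hΩ.mem_nhds hz)
    have hK : IntegrableOn f (Metric.closedBall z ε) :=
      hf.integrableOn_compact_subset hεΩ (isCompact_closedBall _ _)
    have hm : MeasurableSet (Metric.closedBall z ε) := measurableSet_closedBall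
    have e3 : 3 * (ε / 3) = ε := by ring
    obtain ⟨h, h1, h2⟩ := VeryWeakCR.local_rep (hK.integrable_indicator hm) (z₀ := z) (r := ε / 3)
      (by positivity) (by
        intro φ a b c
        rw [e3] at c
        have key : ∀ v, ∫ w, fderiv ℝ φ w v • (Metric.closedBall z ε).indicator f w =
            ∫ w in Ω, fderiv ℝ φ w v • f w := by
          intro v
          rw [← integral_indicator hΩ.measurableSet]
          congr 1
          ext w
          by_cases hw : w ∈ tsupport φ
          · simp [Set.indicator_of_mem (c hw), Set.indicator_of_mem (hεΩ (c hw))]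
          · have := VeryWeakCR.fderiv_zero_off v w hw
            by_cases hwΩ : w ∈ Ω
            · simp [this, Set.indicator_of_mem hwΩ]
            · simp [this, Set.indicator_of_notMem hwΩ]
        rw [key, key]
        exact VeryWeakCR.weak_dbar f hf W hW hCR₁ hCR₂ φ a b (c.trans hεΩ))
    have hsub : Metric.ball z (ε / 3) ⊆ Metric.closedBall z ε :=
      Metric.ball_subset_closedBall.trans (Metric.closedBall_subset_closedBall (by linarith))
    refine ⟨ε / 3, by positivity, h, hsub.trans hεΩ, h1, ?_⟩
    filter_upwards [h2] with w hw hwb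
    rw [← hw hwb, Set.indicator_of_mem (hsub hwb)]
  choose! r hr h hsub hdiff hae using hloc
  have heq : ∀ z ∈ Ω, ∀ w ∈ Metric.ball z (r z), h w w = h z w := by
    intro z hz w hw
    have hwΩ := hsub z hz hw
    have hEq : Set.EqOn (h w) (h z) (Metric.ball w (r w) ∩ Metric.ball z (r z)) := by
      refine Measure.eqOn_open_of_ae_eq (μ := volume) ?_
        (Metric.isOpen_ball.inter Metric.isOpen_ball) ?_ ?_
      · rw [Filter.EventuallyEq, ae_restrict_iff' (measurableSet_ball.inter measurableSet_ball)]
        filter_upwards [hae z hz, hae w hwΩ] with t h1 h2 ht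
        rw [← h1 ht.2, ← h2 ht.1]
      · exact fun t ht => (hdiff w hwΩ t ht.1).continuousAt.continuousWithinAt
      · exact fun t ht => (hdiff z hz t ht.2).continuousAt.continuousWithinAt
    exact hEq ⟨Metric.mem_ball_self (hr w hwΩ), hw⟩
  refine ⟨fun z => h z z, ?_, ?_⟩
  · intro z hz
    refine (hdiff z hz z (Metric.mem_ball_self (hr z hz))).congr_of_eventuallyEq ?_
    filter_upwards [Metric.ball_mem_nhds z (hr z hz)] with w hw
    exact heq z hz w hw
  · rw [Filter.EventuallyEq, ae_restrict_iff' hΩ.measurableSet, ae_iff]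
    refine measure_null_of_locally_null _ ?_
    intro z hz
    have hzΩ : z ∈ Ω := by
      by_contra hcon
      exact hz (fun h => absurd h hcon)
    refine ⟨{w | ¬ (w ∈ Metric.ball z (r z) → f w = h z w)}, ?_, ae_iff.1 (hae z hzΩ)⟩
    filter_upwards [self_mem_nhdsWithin,
      mem_nhdsWithin_of_mem_nhds (Metric.ball_mem_nhds z (hr z hzΩ))] with w hw hwb
    intro hcon
    apply hw
    intro _
    rw [hcon hwb]
    exact (heq z hzΩ w hwb).symm
end

section
/- Let Ω ⊆ ℂ be open and let X be a complex Banach space. A function f : Ω → X is holomorphic if and only if it is weakly holomorphic, i.e. x' ∘ f is holomorphic for every x' ∈ X'. In this case f satisfies Cauchy's integral formula: f(z) = (1/(2πi)) ∫_{|w−z₀|=r₀} f(w)/(w−z) dw for every z₀ ∈ Ω and r₀ > 0 with the closed ball B̄(z₀, r₀) ⊆ Ω and every z ∈ B(z₀, r₀). -/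
open MeasureTheory Metric

/-- A weakly holomorphic function is (strongly) continuous. -/
theorem weak_continuousAt
    {X : Type*} [NormedAddCommGroup X] [NormedSpace ℂ X]
    {Ω : Set ℂ} (hΩ : IsOpen Ω) {f : ℂ → X}
    (h : ∀ x' : X →L[ℂ] ℂ, ∀ z ∈ Ω, DifferentiableAt ℂ (fun w => x' (f w)) z)
    {a : ℂ} (ha : a ∈ Ω) : ContinuousAt f a := by
  obtain ⟨r, hr, hsub⟩ := Metric.nhds_basis_closedBall.mem_iff.1 (hΩ.mem_nhds ha)
  have key : ∃ C, ∀ z : closedBall a r,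
      ‖NormedSpace.inclusionInDoubleDual ℂ X (slope f a z)‖ ≤ C := by
    refine banach_steinhaus fun x' => ?_
    have hc : ContinuousOn (dslope (fun w => x' (f w)) a) (closedBall a r) :=
      (continuousOn_dslope (closedBall_mem_nhds a hr)).2
        ⟨fun w hw => (h x' w (hsub hw)).continuousAt.continuousWithinAt, h x' a ha⟩
    obtain ⟨C, hC⟩ := (isCompact_closedBall a r).exists_bound_of_continuousOn hc
    refine ⟨C, fun z => ?_⟩
    have hz := hC z z.2
    rw [NormedSpace.dual_def]
    by_cases hza : (z : ℂ) = a
    · rw [hza, slope_same, map_zero, norm_zero]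
      exact (norm_nonneg _).trans hz
    · rw [dslope_of_ne _ hza] at hz
      simpa [slope_def_module] using hz
  obtain ⟨C, hC⟩ := key
  have hb : ∀ᶠ z in nhds a, dist (f z) (f a) ≤ C * dist z a := by
    filter_upwards [closedBall_mem_nhds a hr] with z hz
    have h1 := hC ⟨z, hz⟩
    have h2 := (NormedSpace.inclusionInDoubleDualLi (E := X) ℂ).norm_map (slope f a z)
    have h3 : ‖slope f a z‖ ≤ C := h2 ▸ h1
    have h4 : f z - f a = (z - a) • slope f a z := (sub_smul_slope f a z).symm
    rw [dist_eq_norm, dist_eq_norm, h4, norm_smul, mul_comm]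
    gcongr
  refine tendsto_iff_dist_tendsto_zero.2
    (squeeze_zero' (Filter.Eventually.of_forall fun _ => dist_nonneg) hb ?_)
  have : ContinuousAt (fun z => C * dist z a) a := by fun_prop
  simpa [ContinuousAt] using this

/-- `f : Ω → X` (Ω ⊆ ℂ open, X a complex Banach space) is holomorphic
iff it is weakly holomorphic; in that case it satisfies Cauchy's integral formula. -/
theorem weakly_holomorphic_iff_and_cauchy_formula
    {X : Type*} [NormedAddCommGroup X] [NormedSpace ℂ X] [CompleteSpace X]
    {Ω : Set ℂ} (hΩ : IsOpen Ω) (f : ℂ → X) :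
    ((∀ z ∈ Ω, DifferentiableAt ℂ f z) ↔
      ∀ x' : X →L[ℂ] ℂ, ∀ z ∈ Ω, DifferentiableAt ℂ (fun w => x' (f w)) z) ∧
    ((∀ z ∈ Ω, DifferentiableAt ℂ f z) →
      ∀ z₀ ∈ Ω, ∀ r₀ > (0 : ℝ), closedBall z₀ r₀ ⊆ Ω → ∀ z ∈ ball z₀ r₀,
        f z = (2 * Real.pi * Complex.I)⁻¹ • ∮ w in C(z₀, r₀), (w - z)⁻¹ • f w) := by
  have hcauchy : (∀ z ∈ Ω, DifferentiableAt ℂ f z) →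
      ∀ z₀ ∈ Ω, ∀ r₀ > (0 : ℝ), closedBall z₀ r₀ ⊆ Ω → ∀ z ∈ ball z₀ r₀,
        f z = (2 * Real.pi * Complex.I)⁻¹ • ∮ w in C(z₀, r₀), (w - z)⁻¹ • f w := by
    intro h z₀ _ r₀ _ hsub z hz
    refine (Complex.two_pi_I_inv_smul_circleIntegral_sub_inv_smul_of_differentiable_on_off_countable
      Set.countable_empty hz ?_ ?_).symm
    · exact fun w hw => (h w (hsub hw)).continuousAt.continuousWithinAt
    · exact fun w hw => h w (hsub (ball_subset_closedBall hw.1))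
  refine ⟨⟨fun h x' z hz => x'.differentiableAt.comp z (h z hz), fun h => ?_⟩, hcauchy⟩
  have hcont : ∀ z ∈ Ω, ContinuousAt f z := fun z hz => weak_continuousAt hΩ h hz
  intro a ha
  obtain ⟨r, hr, hsub⟩ := Metric.nhds_basis_closedBall.mem_iff.1 (hΩ.mem_nhds ha)
  lift r to NNReal using hr.le
  have hr' : 0 < r := by exact_mod_cast hr
  have hcs : ContinuousOn f (sphere a r) := fun w hw =>
    (hcont w (hsub (sphere_subset_closedBall hw))).continuousWithinAt
  have hps := hasFPowerSeriesOn_cauchy_integral (hcs.circleIntegrable r.coe_nonneg) hr'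
  refine hps.analyticAt.differentiableAt.congr_of_eventuallyEq ?_
  filter_upwards [ball_mem_nhds a hr] with z hz
  rw [SeparatingDual.eq_iff_forall_dual_eq (R := ℂ)]
  intro x'
  have hx := Complex.two_pi_I_inv_smul_circleIntegral_sub_inv_smul_of_differentiable_on_off_countable
      (f := fun w => x' (f w)) Set.countable_empty hz
      (fun w hw => (h x' w (hsub hw)).continuousAt.continuousWithinAt)
      (fun w hw => h x' w (hsub (ball_subset_closedBall hw.1)))
  rw [← hx, map_smul]
  congr 1
  have hintegrable : CircleIntegrable (fun w => (w - z)⁻¹ • f w) a r := by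
    refine ContinuousOn.circleIntegrable r.coe_nonneg (ContinuousOn.smul ?_ hcs)
    refine ContinuousOn.inv₀ (by fun_prop) fun w hw h0 => ?_
    rw [sub_eq_zero] at h0
    subst h0
    rw [mem_sphere] at hw
    rw [mem_ball] at hz
    exact hz.ne hw
  unfold circleIntegral
  rw [← x'.intervalIntegral_comp_comm]
  · simp
  · exact hintegrable.out
end

section
/- Let X be a complex Banach space, Ω ⊆ ℂ open, and let (f_i)_{i∈I} be a net (indexed by a directed set I) of holomorphic functions f_i : Ω → X which is locally L¹-bounded, i.e. there exists g ∈ L¹_loc(Ω, ℝ) such that ‖f_i(ξ)‖_X ≤ g(ξ) for almost every ξ ∈ Ω and all i ∈ I. Assume f(z) := lim_{i∈I} f_i(z) exists for every z ∈ Ω. Then f is holomorphic and f_i → f uniformly on every compact subset of Ω. -/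
open MeasureTheory Filter

lemma aux_circle {X : Type*} [NormedAddCommGroup X] [NormedSpace ℂ X] [CompleteSpace X]
    (F : ℂ → X) (c : ℂ) (ρ : ℝ) (hρ : 0 < ρ)
    (hF : ∀ z ∈ Metric.closedBall c ρ, DifferentiableAt ℂ F z) :
    ENNReal.ofReal (2 * Real.pi) * ‖F c‖ₑ ≤
      ∫⁻ θ in Set.Ioo (-Real.pi) Real.pi, ‖F (c + Complex.polarCoord.symm (ρ, θ))‖ₑ := by
  have h1 : Real.circleAverage F c ρ = F c := by
    apply DiffContOnCl.circleAverage
    rw [abs_of_pos hρ]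
    apply DifferentiableOn.diffContOnCl
    rw [closure_ball _ hρ.ne']
    exact fun z hz => (hF z hz).differentiableWithinAt
  have hper : Function.Periodic (fun θ => F (circleMap c ρ θ)) (2 * Real.pi) := by
    intro θ; simp only [periodic_circleMap c ρ θ]
  have h2 := hper.intervalIntegral_add_eq 0 (-Real.pi)
  rw [Real.circleAverage] at h1
  rw [zero_add, show -Real.pi + 2 * Real.pi = Real.pi by ring,
    intervalIntegral.integral_of_le (by linarith [Real.pi_pos]) (a := -Real.pi),
    integral_Ioc_eq_integral_Ioo] at h2
  rw [h2] at h1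
  have h3 : (2 * Real.pi) • F c = ∫ θ in Set.Ioo (-Real.pi) Real.pi, F (circleMap c ρ θ) := by
    rw [← h1, smul_smul, mul_inv_cancel₀ (by positivity), one_smul]
  have h4 : ENNReal.ofReal (2 * Real.pi) * ‖F c‖ₑ = ‖(2 * Real.pi) • F c‖ₑ := by
    rw [enorm_smul, Real.enorm_of_nonneg (by positivity)]
  rw [h4, h3]
  refine (enorm_integral_le_lintegral_enorm _).trans_eq ?_
  refine lintegral_congr fun θ => ?_
  simp [circleMap, Complex.exp_mul_I]

lemma aux_disc {X : Type*} [NormedAddCommGroup X] [NormedSpace ℂ X] [CompleteSpace X]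
    (F : ℂ → X) (c : ℂ) (r : ℝ) (hr : 0 < r)
    (hF : ∀ z ∈ Metric.ball c r, DifferentiableAt ℂ F z) :
    (ENNReal.ofReal (r / 2) * ENNReal.ofReal (2 * Real.pi) * ENNReal.ofReal (r / 2)) * ‖F c‖ₑ ≤
      ∫⁻ z in Metric.ball c r, ‖F z‖ₑ := by
  have hb : ∀ p : ℝ × ℝ, p.1 ∈ Set.Ioo (r/2) r →
      c + Complex.polarCoord.symm p ∈ Metric.ball c r := by
    intro p hp
    rw [Metric.mem_ball, dist_self_add_left, Complex.norm_polarCoord_symm, abs_of_pos (by linarith [hp.1])]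
    exact hp.2
  have hcs : Continuous (fun p : ℝ × ℝ => Complex.polarCoord.symm p) := by
    simp only [Complex.polarCoord_symm_apply]
    fun_prop
  calc _ = ∫⁻ ρ in Set.Ioo (r/2) r, ENNReal.ofReal (r / 2) * (ENNReal.ofReal (2 * Real.pi) * ‖F c‖ₑ) := by
        rw [setLIntegral_const, Real.volume_Ioo, show r - r/2 = r/2 by ring]
        ring
    _ ≤ ∫⁻ ρ in Set.Ioo (r/2) r, ∫⁻ θ in Set.Ioo (-Real.pi) Real.pi,
          ENNReal.ofReal ρ * ‖F (c + Complex.polarCoord.symm (ρ, θ))‖ₑ := by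
        refine setLIntegral_mono' measurableSet_Ioo fun ρ hρ => ?_
        rw [lintegral_const_mul' _ _ ENNReal.ofReal_ne_top]
        gcongr
        · exact hρ.1.le
        · refine aux_circle F c ρ (by linarith [hρ.1]) fun z hz => hF z ?_
          exact Metric.closedBall_subset_ball hρ.2 hz
    _ = ∫⁻ p in Set.Ioo (r/2) r ×ˢ Set.Ioo (-Real.pi) Real.pi,
          ENNReal.ofReal p.1 * ‖F (c + Complex.polarCoord.symm p)‖ₑ := by
        rw [Measure.volume_eq_prod, setLIntegral_prod]
        refine AEMeasurable.mul (ENNReal.measurable_ofReal.comp measurable_fst).aemeasurable ?_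
        refine ContinuousOn.aemeasurable ?_ (measurableSet_Ioo.prod measurableSet_Ioo)
        refine ContinuousOn.enorm ?_
        have hFc : ContinuousOn F (Metric.ball c r) :=
          fun z hz => (hF z hz).continuousAt.continuousWithinAt
        exact hFc.comp (continuous_const.add hcs).continuousOn fun p hp => hb p hp.1
    _ = ∫⁻ p in Set.Ioo (r/2) r ×ˢ Set.Ioo (-Real.pi) Real.pi, ENNReal.ofReal p.1 •
          (Metric.ball c r).indicator (fun z => ‖F z‖ₑ) (c + Complex.polarCoord.symm p) := by
        refine setLIntegral_congr_fun (measurableSet_Ioo.prod measurableSet_Ioo) fun p hp => ?_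
        rw [Set.indicator_of_mem (hb p hp.1), smul_eq_mul]
    _ ≤ ∫⁻ p in polarCoord.target, ENNReal.ofReal p.1 •
          (Metric.ball c r).indicator (fun z => ‖F z‖ₑ) (c + Complex.polarCoord.symm p) := by
        refine lintegral_mono_set ?_
        rw [polarCoord_target]
        refine Set.prod_mono (fun x hx => ?_) subset_rfl
        exact lt_trans (by positivity) hx.1
    _ = ∫⁻ w, (Metric.ball c r).indicator (fun z => ‖F z‖ₑ) (c + w) :=
        Complex.lintegral_comp_polarCoord_symm
          (fun w => (Metric.ball c r).indicator (fun z => ‖F z‖ₑ) (c + w))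
    _ = ∫⁻ z in Metric.ball c r, ‖F z‖ₑ := by
        rw [lintegral_add_left_eq_self (fun w => (Metric.ball c r).indicator (fun z => ‖F z‖ₑ) w) c,
          lintegral_indicator measurableSet_ball]

lemma aux_bound {X : Type*} [NormedAddCommGroup X] [NormedSpace ℂ X] [CompleteSpace X]
    {Ω : Set ℂ} (hΩ : IsOpen Ω) {I : Type*}
    (F : I → ℂ → X) (hol : ∀ i : I, ∀ z ∈ Ω, DifferentiableAt ℂ (F i) z)
    (g : ℂ → ℝ) (hg : LocallyIntegrableOn g Ω)
    (hbd : ∀ i : I, ∀ᵐ ξ ∂(volume.restrict Ω), ‖F i ξ‖ ≤ g ξ) (z₀ : ℂ) (hz : z₀ ∈ Ω) :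
    ∃ r > 0, Metric.ball z₀ r ⊆ Ω ∧ ∃ M : ℝ, ∀ i, ∀ z ∈ Metric.ball z₀ r, ‖F i z‖ ≤ M := by
  obtain ⟨s, hs, hint⟩ := hg z₀ hz
  rw [hΩ.nhdsWithin_eq hz] at hs
  obtain ⟨R, hR, hRs⟩ := Metric.mem_nhds_iff.1 (inter_mem hs (hΩ.mem_nhds hz))
  have hRΩ : Metric.ball z₀ R ⊆ Ω := fun z h => (hRs h).2
  set J : ENNReal := ∫⁻ z in Metric.ball z₀ R, ‖g z‖ₑ with hJ
  have hJtop : J ≠ ⊤ := (hint.mono_set (fun z h => (hRs h).1)).2.ne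
  set r := R / 2 with hr
  have hr0 : 0 < r := by positivity
  set K := (ENNReal.ofReal (r / 2) * ENNReal.ofReal (2 * Real.pi) * ENNReal.ofReal (r / 2))
  have hK : K ≠ 0 := by
    have : 0 < Real.pi := Real.pi_pos
    simp [K, hr0, this]
  have hKt : K ≠ ⊤ := by simp [K, ENNReal.mul_eq_top]
  refine ⟨r, hr0, (Metric.ball_subset_ball (by linarith)).trans hRΩ, (J / K).toReal, ?_⟩
  intro i z hzr
  have hsub : Metric.ball z r ⊆ Metric.ball z₀ R := by
    apply Metric.ball_subset_ball'
    rw [Metric.mem_ball] at hzr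
    linarith
  have h1 := aux_disc (F i) z r hr0 fun w hw => hol i w (hRΩ (hsub hw))
  have h2 : ∫⁻ w in Metric.ball z r, ‖F i w‖ₑ ≤ J := by
    refine (lintegral_mono_set hsub).trans ?_
    refine lintegral_mono_ae ?_
    have := ae_mono (Measure.restrict_mono hRΩ le_rfl) (hbd i)
    filter_upwards [this] with w hw
    rw [enorm_le_iff_norm_le]
    exact hw.trans (le_abs_self _)
  have h3 : ‖F i z‖ₑ ≤ J / K := by
    rw [ENNReal.le_div_iff_mul_le (.inl hK) (.inl hKt), mul_comm]
    exact h1.trans h2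
  have := ENNReal.toReal_mono (ENNReal.div_ne_top hJtop hK) h3
  simpa using this

/-- A locally `L¹`-bounded net of holomorphic functions converging
pointwise on an open set `Ω ⊆ ℂ` converges uniformly on compact subsets of `Ω`, and the
limit is holomorphic. -/
theorem pointwise_limit_of_locally_L1_bounded_net_holomorphic
    {X : Type*} [NormedAddCommGroup X] [NormedSpace ℂ X] [CompleteSpace X]
    {Ω : Set ℂ} (hΩ : IsOpen Ω)
    {I : Type*} [Preorder I] [IsDirected I (· ≤ ·)] [Nonempty I]
    (F : I → ℂ → X) (hol : ∀ i : I, ∀ z ∈ Ω, DifferentiableAt ℂ (F i) z)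
    (g : ℂ → ℝ) (hg : LocallyIntegrableOn g Ω)
    (hbd : ∀ i : I, ∀ᵐ ξ ∂(volume.restrict Ω), ‖F i ξ‖ ≤ g ξ)
    (f : ℂ → X) (hf : ∀ z ∈ Ω, Tendsto (fun i => F i z) atTop (nhds (f z))) :
    (∀ z ∈ Ω, DifferentiableAt ℂ f z) ∧
    ∀ K ⊆ Ω, IsCompact K → TendstoUniformlyOn (fun i z => F i z) f atTop K := by
  have key : TendstoLocallyUniformlyOn F f atTop Ω := by
    rw [Metric.tendstoLocallyUniformlyOn_iff]
    intro ε hε z₀ hz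
    obtain ⟨r, hr, hrΩ, M, hM⟩ := aux_bound hΩ F hol g hg hbd z₀ hz
    have hz₀ : z₀ ∈ Metric.ball z₀ r := Metric.mem_ball_self hr
    have hM0 : 0 ≤ M := (norm_nonneg _).trans (hM (Classical.arbitrary I) z₀ hz₀)
    have hL : ∀ i, ∀ z ∈ Metric.ball z₀ r, dist (F i z) (F i z₀) ≤ 2 * M / r * dist z z₀ := by
      intro i z hzr
      refine Complex.dist_le_div_mul_dist_of_mapsTo_ball
        (fun w hw => (hol i w (hrΩ hw)).differentiableWithinAt) (fun w hw => ?_) hzr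
      rw [Metric.mem_closedBall, dist_eq_norm]
      linarith [norm_sub_le (F i w) (F i z₀), hM i w hw, hM i z₀ hz₀]
    have hLf : ∀ z ∈ Metric.ball z₀ r, dist (f z) (f z₀) ≤ 2 * M / r * dist z z₀ :=
      fun z hzr => le_of_tendsto ((hf z (hrΩ hzr)).dist (hf z₀ hz))
        (Eventually.of_forall fun i => hL i z hzr)
    have hcont : Tendsto (fun z => 2 * M / r * dist z z₀) (nhds z₀) (nhds 0) := by
      have : Continuous (fun z => 2 * M / r * dist z z₀) := by fun_prop
      simpa using this.tendsto z₀
    have hev : ∀ᶠ z in nhds z₀, z ∈ Metric.ball z₀ r ∧ 2 * M / r * dist z z₀ < ε / 3 :=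
      Eventually.and (Metric.ball_mem_nhds z₀ hr) (hcont.eventually (gt_mem_nhds (by positivity)))
    refine ⟨_, mem_nhdsWithin_of_mem_nhds hev, ?_⟩
    filter_upwards [Metric.tendsto_nhds.1 (hf z₀ hz) (ε / 3) (by positivity)] with i hi z hz'
    have a := hL i z hz'.1
    have b := hLf z hz'.1
    have c := hz'.2
    have d := dist_triangle4 (f z) (f z₀) (F i z₀) (F i z)
    rw [dist_comm (f z₀), dist_comm (F i z₀) (F i z)] at d
    linarith
  constructor
  · intro z hz
    exact (key.differentiableOn (Eventually.of_forall fun i w hw =>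
      (hol i w hw).differentiableWithinAt) hΩ).differentiableAt (hΩ.mem_nhds hz)
  · exact (tendstoLocallyUniformlyOn_iff_forall_isCompact hΩ).1 key
end

section
/- (Vitali's theorem, holomorphic case) Let X be a complex Banach space, let Ω ⊆ ℂ be open and connected, and let (f_n)_{n∈ℕ} be a sequence of holomorphic functions f_n : Ω → X which is locally L¹-bounded, i.e. there exists g ∈ L¹_loc(Ω, ℝ) with ‖f_n(ξ)‖_X ≤ g(ξ) for almost every ξ ∈ Ω and all n. Let N ⊆ Ω be a set of uniqueness for holomorphic functions, and suppose lim_{n→∞} f_n(z) exists for every z ∈ N. Then lim_{n→∞} f_n exists uniformly on every compact subset of Ω and the limit function is holomorphic on Ω. -/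
open MeasureTheory Filter

/-- Mean value inequality on circles, in polar coordinates. -/
lemma vh_circle {X : Type*} [NormedAddCommGroup X] [NormedSpace ℂ X] [CompleteSpace X]
    {f : ℂ → X} {z : ℂ} {ρ : ℝ} (hf : ∀ w ∈ Metric.ball z ρ, DifferentiableAt ℂ f w)
    {r : ℝ} (hr0 : 0 < r) (hr : r < ρ) :
    ENNReal.ofReal (2 * Real.pi) * ‖f z‖ₑ ≤
      ∫⁻ θ in Set.Ioo (-Real.pi) Real.pi, ‖f (z + Complex.polarCoord.symm (r, θ))‖ₑ := by
  have hd : DiffContOnCl ℂ f (Metric.ball z |r|) := by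
    apply DifferentiableOn.diffContOnCl
    intro w hw
    have hw' := Metric.closure_ball_subset_closedBall hw
    rw [abs_of_pos hr0] at hw'
    exact (hf w (Metric.closedBall_subset_ball hr hw')).differentiableWithinAt
  have h1 := hd.circleAverage
  rw [Real.circleAverage_eq_integral_add (-Real.pi),
    intervalIntegral.integral_comp_add_right (fun θ => f (circleMap z r θ))] at h1
  have h2 : (2 * Real.pi) • f z = ∫ θ in (-Real.pi)..Real.pi, f (circleMap z r θ) := by
    rw [← h1, smul_smul, mul_inv_cancel₀ (by positivity), one_smul]
    congr 1 <;> ring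
  have h3 : ENNReal.ofReal (2 * Real.pi) * ‖f z‖ₑ = ‖(2 * Real.pi) • f z‖ₑ := by
    rw [enorm_smul, Real.enorm_eq_ofReal (by positivity)]
  rw [h3, h2, intervalIntegral.integral_of_le (by linarith [Real.pi_pos]),
    integral_Ioc_eq_integral_Ioo]
  refine (enorm_integral_le_lintegral_enorm _).trans (le_of_eq ?_)
  congr 1
  ext θ
  simp [circleMap, Complex.exp_mul_I]

/-- Mean value inequality on discs. -/
lemma vh_disc {X : Type*} [NormedAddCommGroup X] [NormedSpace ℂ X] [CompleteSpace X]
    {ρ : ℝ} (hρ : 0 < ρ) : ∃ c : ENNReal, c ≠ 0 ∧ c ≠ ⊤ ∧ ∀ (f : ℂ → X) (z : ℂ),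
      (∀ w ∈ Metric.ball z ρ, DifferentiableAt ℂ f w) →
      c * ‖f z‖ₑ ≤ ∫⁻ w in Metric.ball z ρ, ‖f w‖ₑ := by
  refine ⟨ENNReal.ofReal (2 * Real.pi) * (ENNReal.ofReal (ρ/2) * ENNReal.ofReal (ρ/2)), ?_, ?_, ?_⟩
  · simp [hρ, Real.pi_pos]
  · finiteness
  intro f z hf
  have e1 : ∫⁻ w in Metric.ball z ρ, ‖f w‖ₑ =
      ∫⁻ w, (Metric.ball (0:ℂ) ρ).indicator (fun w => ‖f (z + w)‖ₑ) w := by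
    rw [← lintegral_indicator Metric.isOpen_ball.measurableSet,
      ← lintegral_add_left_eq_self _ z]
    congr 1
    ext w
    simp [Set.indicator]
  rw [e1, ← Complex.lintegral_comp_polarCoord_symm]
  set S : Set (ℝ × ℝ) := Set.Ioo (ρ/2) ρ ×ˢ Set.Ioo (-Real.pi) Real.pi with hS
  have hSm : MeasurableSet S := measurableSet_Ioo.prod measurableSet_Ioo
  have hST : S ⊆ polarCoord.target := by
    rintro ⟨r, θ⟩ ⟨h1, h2⟩
    refine ⟨?_, h2⟩
    simp only [Set.mem_Ioo, Set.mem_Ioi] at *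
    linarith
  have hmem : ∀ p ∈ S, Complex.polarCoord.symm p ∈ Metric.ball (0:ℂ) ρ := by
    rintro ⟨r, θ⟩ ⟨h1, h2⟩
    rw [mem_ball_zero_iff, Complex.norm_polarCoord_symm]
    simp only [Set.mem_Ioo] at *
    rw [abs_of_pos (by linarith)]
    exact h1.2
  have hmem' : ∀ p ∈ S, z + Complex.polarCoord.symm p ∈ Metric.ball z ρ := by
    intro p hp
    simpa using hmem p hp
  refine le_trans ?_ (lintegral_mono_set hST)
  have e2 : ∫⁻ p in S, ENNReal.ofReal p.1 •
        (Metric.ball (0:ℂ) ρ).indicator (fun w => ‖f (z + w)‖ₑ) (Complex.polarCoord.symm p)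
      = ∫⁻ p in S, ENNReal.ofReal p.1 * ‖f (z + Complex.polarCoord.symm p)‖ₑ := by
    refine setLIntegral_congr_fun hSm ?_
    intro p hp
    simp only [Set.indicator_of_mem (hmem p hp), smul_eq_mul]
  rw [e2]
  have hcont : Continuous (fun p : ℝ × ℝ => z + Complex.polarCoord.symm p) := by
    simp only [Complex.polarCoord_symm_apply]
    fun_prop
  have hcf : ContinuousOn f (Metric.ball z ρ) :=
    fun w hw => (hf w hw).continuousAt.continuousWithinAt
  have hmeas : AEMeasurable (fun p : ℝ × ℝ =>
      ENNReal.ofReal p.1 * ‖f (z + Complex.polarCoord.symm p)‖ₑ) (volume.restrict S) := by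
    refine AEMeasurable.mul (f := fun p : ℝ × ℝ => ENNReal.ofReal p.1)
      (measurable_fst.ennreal_ofReal.aemeasurable) ?_
    have : ContinuousOn (fun p : ℝ × ℝ => f (z + Complex.polarCoord.symm p)) S :=
      hcf.comp hcont.continuousOn hmem'
    exact ContinuousOn.aemeasurable (continuous_enorm.comp_continuousOn this) hSm
  rw [hS, Measure.volume_eq_prod, ← Measure.prod_restrict] at hmeas ⊢
  rw [lintegral_prod _ hmeas]
  have e3 : ∫⁻ r in Set.Ioo (ρ/2) ρ, ENNReal.ofReal (ρ/2) * (ENNReal.ofReal (2 * Real.pi) * ‖f z‖ₑ)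
      = ENNReal.ofReal (2 * Real.pi) * (ENNReal.ofReal (ρ/2) * ENNReal.ofReal (ρ/2)) * ‖f z‖ₑ := by
    rw [setLIntegral_const, Real.volume_Ioo, show ρ - ρ/2 = ρ/2 by ring]
    ring
  rw [← e3]
  refine setLIntegral_mono' measurableSet_Ioo ?_
  intro r hr
  rw [lintegral_const_mul' _ _ ENNReal.ofReal_ne_top]
  exact mul_le_mul' (ENNReal.ofReal_le_ofReal hr.1.le)
    (vh_circle hf (by linarith [hr.1]) hr.2)

/-- Local boundedness. -/
lemma vh_bdd {X : Type*} [NormedAddCommGroup X] [NormedSpace ℂ X] [CompleteSpace X]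
    {Ω : Set ℂ} (hΩ : IsOpen Ω)
    (F : ℕ → ℂ → X) (hol : ∀ n : ℕ, ∀ z ∈ Ω, DifferentiableAt ℂ (F n) z)
    (g : ℂ → ℝ) (hg : LocallyIntegrableOn g Ω)
    (hbd : ∀ n : ℕ, ∀ᵐ ξ ∂(volume.restrict Ω), ‖F n ξ‖ ≤ g ξ) {z : ℂ} (hz : z ∈ Ω) :
    ∃ r > 0, ∃ C : ℝ, Metric.ball z r ⊆ Ω ∧ ∀ n, ∀ w ∈ Metric.ball z r, ‖F n w‖ ≤ C := by
  obtain ⟨R, hR, hRΩ⟩ := Metric.nhds_basis_closedBall.mem_iff.1 (hΩ.mem_nhds hz)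
  have hint : IntegrableOn g (Metric.closedBall z R) :=
    hg.integrableOn_compact_subset hRΩ (isCompact_closedBall z R)
  obtain ⟨c, hc0, hct, hc⟩ := vh_disc (X := X) (ρ := R/2) (by positivity)
  set I : ENNReal := ∫⁻ w in Metric.closedBall z R, ‖g w‖ₑ with hI
  have hIt : I ≠ ⊤ := hint.hasFiniteIntegral.ne
  refine ⟨R/2, by positivity, (I / c).toReal,
    (Metric.ball_subset_closedBall.trans (Metric.closedBall_subset_closedBall (by linarith))).trans
      hRΩ, ?_⟩
  intro n w hw
  have hsub : Metric.ball w (R/2) ⊆ Metric.closedBall z R := by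
    refine Metric.ball_subset_closedBall.trans (Metric.closedBall_subset_closedBall' ?_)
    rw [Metric.mem_ball] at hw
    linarith
  have h1 := hc (F n) w (fun v hv => hol n v (hRΩ (hsub hv)))
  have h2 : ∫⁻ v in Metric.ball w (R/2), ‖F n v‖ₑ ≤ I := by
    refine le_trans ?_ (lintegral_mono_set hsub)
    refine lintegral_mono_ae ?_
    filter_upwards [ae_restrict_of_ae_restrict_of_subset (hsub.trans hRΩ) (hbd n)] with v hv
    exact enorm_le_iff_norm_le.2 (hv.trans (le_abs_self _))
  have h3 : ‖F n w‖ₑ ≤ I / c := by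
    rw [ENNReal.le_div_iff_mul_le (Or.inl hc0) (Or.inl hct), mul_comm]
    exact h1.trans h2
  have h4 := ENNReal.toReal_mono (ENNReal.div_ne_top hIt hc0) h3
  simpa using h4

/-- Second order Taylor estimate. -/
lemma vh_taylor {X : Type*} [NormedAddCommGroup X] [NormedSpace ℂ X] [CompleteSpace X]
    {f : ℂ → X} {z : ℂ} {r C : ℝ} (hr : 0 < r)
    (hf : ∀ w ∈ Metric.ball z r, DifferentiableAt ℂ f w)
    (hC : ∀ w ∈ Metric.ball z r, ‖f w‖ ≤ C) :
    ‖deriv f z‖ ≤ C / (r/4) ∧ ∀ w ∈ Metric.ball z (r/4),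
      ‖f w - f z - (w - z) • deriv f z‖ ≤ C / (r/4) / (r/4) * ‖w - z‖ * ‖w - z‖ := by
  have hsub : ∀ {w : ℂ} {s : ℝ}, w ∈ Metric.ball z s → 
      Metric.closedBall w (r/4) ⊆ Metric.ball z (s + r/4) := by
    intro w s hw
    refine Metric.closedBall_subset_ball' ?_
    rw [Metric.mem_ball] at hw
    linarith
  have key : ∀ (h : ℂ → X) (B s : ℝ), (∀ w ∈ Metric.ball z (s + r/4), DifferentiableAt ℂ h w) →
      (∀ w ∈ Metric.ball z (s + r/4), ‖h w‖ ≤ B) → ∀ w ∈ Metric.ball z s,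
      ‖deriv h w‖ ≤ B / (r/4) := by
    intro h B s hd hB w hw
    refine Complex.norm_deriv_le_of_forall_mem_sphere_norm_le (by positivity) ?_ ?_
    · apply DifferentiableOn.diffContOnCl
      intro v hv
      exact (hd v (hsub hw (Metric.closure_ball_subset_closedBall hv))).differentiableWithinAt
    · intro v hv
      exact hB v (hsub hw (Metric.sphere_subset_closedBall hv))
  have hon : DifferentiableOn ℂ f (Metric.ball z r) := fun w hw => (hf w hw).differentiableWithinAt
  have hmono : ∀ {s : ℝ}, s ≤ r → ∀ {w}, w ∈ Metric.ball z s → w ∈ Metric.ball z r :=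
    fun hs w hw => Metric.ball_subset_ball hs hw
  have hd1 : ∀ w ∈ Metric.ball z (r/2), ‖deriv f w‖ ≤ C / (r/4) :=
    key f C (r/2) (fun w hw => hf w (hmono (by linarith) hw)) 
      (fun w hw => hC w (hmono (by linarith) hw))
  have hdd : ∀ w ∈ Metric.ball z r, DifferentiableAt ℂ (deriv f) w := fun w hw =>
    (hon.deriv Metric.isOpen_ball).differentiableAt (Metric.isOpen_ball.mem_nhds hw)
  have hd2 : ∀ w ∈ Metric.ball z (r/4), ‖deriv (deriv f) w‖ ≤ C / (r/4) / (r/4) :=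
    key (deriv f) (C/(r/4)) (r/4) (fun w hw => hdd w (hmono (by linarith) hw)) 
      (fun w hw => hd1 w (by convert hw using 2; ring))
  refine ⟨hd1 z (Metric.mem_ball_self (by positivity)), ?_⟩
  intro w hw
  have hM : 0 ≤ C / (r/4) / (r/4) := (norm_nonneg _).trans (hd2 w hw)
  have hz4 : z ∈ Metric.ball z (r/4) := Metric.mem_ball_self (by positivity)
  have hlip : ∀ v ∈ Metric.ball z (r/4), ‖deriv f v - deriv f z‖ ≤ C/(r/4)/(r/4) * ‖v - z‖ :=
    fun v hv => (convex_ball z (r/4)).norm_image_sub_le_of_norm_deriv_le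
      (fun x hx => hdd x (hmono (by linarith) hx)) hd2 hz4 hv
  have hseg : ∀ v ∈ segment ℝ z w, v ∈ Metric.ball z (r/4) ∧ ‖v - z‖ ≤ ‖w - z‖ := by
    intro v hv
    refine ⟨(convex_ball z (r/4)).segment_subset hz4 hw hv, ?_⟩
    simpa [norm_sub_rev] using norm_sub_le_of_mem_segment hv
  have := (convex_segment z w).norm_image_sub_le_of_norm_hasDerivWithin_le
    (f := fun v => f v - (v - z) • deriv f z) (f' := fun v => deriv f v - deriv f z)
    (C := C/(r/4)/(r/4) * ‖w - z‖) (x := z) (y := w) ?_ ?_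
    (left_mem_segment ℝ z w) (right_mem_segment ℝ z w)
  · simpa [sub_right_comm] using this
  · intro v hv
    have h1 := (hf v (hmono (by linarith) (hseg v hv).1)).hasDerivAt
    have h2 := (((hasDerivAt_id v).sub_const z).smul_const (deriv f z))
    have h3 := (h1.sub h2).hasDerivWithinAt (s := segment ℝ z w)
    rw [one_smul] at h3
    exact h3
  · intro v hv
    exact (hlip v (hseg v hv).1).trans (mul_le_mul_of_nonneg_left (hseg v hv).2 hM)

open scoped BoundedContinuousFunction

/-- The space of Cauchy sequences, as a subspace of bounded sequences. -/
def vhCauchy (X : Type*) [NormedAddCommGroup X] [NormedSpace ℂ X] : Submodule ℂ (ℕ →ᵇ X) where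
  carrier := {u | CauchySeq (fun n => u n)}
  add_mem' := by
    intro a b ha hb
    simpa using! CauchySeq.add ha hb
  zero_mem' := by
    simpa using! cauchySeq_const (0 : X)
  smul_mem' := by
    intro c a ha
    exact (uniformContinuous_const_smul c).comp_cauchySeq ha

lemma vhCauchy_closed (X : Type*) [NormedAddCommGroup X] [NormedSpace ℂ X] :
    IsClosed (vhCauchy X : Set (ℕ →ᵇ X)) := by
  refine isClosed_of_closure_subset ?_
  intro u hu
  change CauchySeq (fun n => u n)
  rw [Metric.cauchySeq_iff']
  intro ε hε
  obtain ⟨v, hv, huv⟩ := Metric.mem_closure_iff.1 hu (ε/3) (by positivity)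
  have hv' : CauchySeq (fun n => v n) := hv
  obtain ⟨M, hM⟩ := Metric.cauchySeq_iff'.1 hv' (ε/3) (by positivity)
  refine ⟨M, fun n hn => ?_⟩
  have h1 := (BoundedContinuousFunction.dist_coe_le_dist (f := u) (g := v) n).trans_lt huv
  have h2 := (BoundedContinuousFunction.dist_coe_le_dist (f := u) (g := v) M).trans_lt huv
  have h3 := hM n hn
  have h4 := dist_triangle4 (u n) (v n) (v M) (u M)
  rw [dist_comm (v M)] at h4
  linarith

theorem vitali_holomorphic
    {X : Type*} [NormedAddCommGroup X] [NormedSpace ℂ X] [CompleteSpace X]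
    {Ω : Set ℂ} (hΩ : IsOpen Ω) (hΩconn : IsConnected Ω)
    (N : Set ℂ) (hNΩ : N ⊆ Ω)
    (hN : ∀ h : ℂ → ℂ, (∀ z ∈ Ω, DifferentiableAt ℂ h z) → (∀ z ∈ N, h z = 0) →
      ∀ z ∈ Ω, h z = 0)
    (F : ℕ → ℂ → X) (hol : ∀ n : ℕ, ∀ z ∈ Ω, DifferentiableAt ℂ (F n) z)
    (g : ℂ → ℝ) (hg : LocallyIntegrableOn g Ω)
    (hbd : ∀ n : ℕ, ∀ᵐ ξ ∂(volume.restrict Ω), ‖F n ξ‖ ≤ g ξ)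
    (hlim : ∀ z ∈ N, ∃ x : X, Tendsto (fun n => F n z) atTop (nhds x)) :
    ∃ f : ℂ → X, (∀ z ∈ Ω, DifferentiableAt ℂ f z) ∧
      ∀ K ⊆ Ω, IsCompact K → TendstoUniformlyOn (fun n z => F n z) f atTop K := by
  classical
  have hloc := fun z (hz : z ∈ Ω) => vh_bdd hΩ F hol g hg hbd hz
  -- the holomorphic map into the space of bounded sequences
  obtain ⟨G, hG⟩ : ∃ G : ℂ → (ℕ →ᵇ X), ∀ z ∈ Ω, ∀ n, G z n = F n z := by
    have : ∀ z, ∃ u : ℕ →ᵇ X, z ∈ Ω → ∀ n, u n = F n z := by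
      intro z
      by_cases hz : z ∈ Ω
      · obtain ⟨r, hr, C, -, hC⟩ := hloc z hz
        exact ⟨BoundedContinuousFunction.ofNormedAddCommGroupDiscrete (fun n => F n z) C
          (fun n => hC n z (Metric.mem_ball_self hr)), fun _ n => rfl⟩
      · exact ⟨0, fun h => absurd h hz⟩
    choose G hG using this
    exact ⟨G, hG⟩
  have hGd : ∀ z ∈ Ω, DifferentiableAt ℂ G z := by
    intro z hz
    obtain ⟨r, hr, C, hsub, hC⟩ := hloc z hz
    have hT := fun n => vh_taylor hr (fun w hw => hol n w (hsub hw)) (hC n)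
    let G' : ℕ →ᵇ X := BoundedContinuousFunction.ofNormedAddCommGroupDiscrete
      (fun n => deriv (F n) z) (C / (r/4)) (fun n => (hT n).1)
    have hder : HasDerivAt G G' z := by
      rw [hasDerivAt_iff_isLittleO]
      have hO : (fun w => G w - G z - (w - z) • G') =O[nhds z] fun w => ‖w - z‖ * ‖w - z‖ := by
        refine Asymptotics.IsBigO.of_bound (C / (r/4) / (r/4)) ?_
        filter_upwards [Metric.ball_mem_nhds z (show 0 < r/4 by positivity)] with w hw
        have hwΩ : w ∈ Ω := hsub (Metric.ball_subset_ball (by linarith) hw)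
        have hb := fun n => (hT n).2 w hw
        rw [BoundedContinuousFunction.norm_le
          (by simpa [mul_assoc] using (norm_nonneg _).trans (hb 0))]
        intro n
        simpa [hG w hwΩ, hG z hz, G', mul_assoc] using hb n
      refine hO.trans_isLittleO ?_
      have ho : (fun w : ℂ => ‖w - z‖) =o[nhds z] (fun _ => (1:ℝ)) := by
        rw [Asymptotics.isLittleO_one_iff]
        have : Continuous fun w : ℂ => ‖w - z‖ := by fun_prop
        simpa using this.tendsto z
      have := ho.mul_isBigO (Asymptotics.isBigO_refl (fun w : ℂ => ‖w - z‖) (nhds z))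
      simpa using this.norm_right
    exact hder.differentiableAt
  -- pointwise convergence
  have hpt : ∀ z ∈ Ω, CauchySeq (fun n => F n z) := by
    intro z hz
    have : IsClosed (vhCauchy X : Set (ℕ →ᵇ X)) := vhCauchy_closed X
    have hmem : G z ∈ vhCauchy X := by
      by_contra hne
      have hne' : (vhCauchy X).mkQ (G z) ≠ 0 := by
        simpa [Submodule.Quotient.mk_eq_zero] using hne
      obtain ⟨φ, hφ⟩ := SeparatingDual.exists_ne_zero (R := ℂ) hne'
      let ψ : (ℕ →ᵇ X) →L[ℂ] ℂ := φ.comp (vhCauchy X).mkQL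
      have hψ : ∀ w, ψ w = φ ((vhCauchy X).mkQ w) := fun w => rfl
      refine hφ ?_
      rw [← hψ]
      refine hN (fun w => ψ (G w)) (fun w hw => ψ.differentiableAt.comp w (hGd w hw)) ?_ z hz
      intro w hw
      obtain ⟨x, hx⟩ := hlim w hw
      have hwm : G w ∈ vhCauchy X := by
        change CauchySeq (fun n => G w n)
        simp only [hG w (hNΩ hw)]
        exact hx.cauchySeq
      change ψ (G w) = 0
      rw [hψ, Submodule.mkQ_apply, (Submodule.Quotient.mk_eq_zero _).2 hwm, map_zero]
    have : CauchySeq (fun n => G z n) := hmem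
    simpa only [hG z hz] using this
  have hex : ∀ z, ∃ x : X, z ∈ Ω → Tendsto (fun n => F n z) atTop (nhds x) := by
    intro z
    by_cases hz : z ∈ Ω
    · obtain ⟨x, hx⟩ := cauchySeq_tendsto_of_complete (hpt z hz)
      exact ⟨x, fun _ => hx⟩
    · exact ⟨0, fun h => absurd h hz⟩
  choose f hf using hex
  have hlu : TendstoLocallyUniformlyOn F f atTop Ω := by
    rw [Metric.tendstoLocallyUniformlyOn_iff]
    intro ε hε z hz
    have hc := Metric.continuousAt_iff'.1 (hGd z hz).continuousAt (ε/4) (by positivity)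
    refine ⟨{w | dist (G w) (G z) < ε/4} ∩ Ω,
      mem_nhdsWithin_of_mem_nhds (inter_mem hc (hΩ.mem_nhds hz)), ?_⟩
    filter_upwards [Metric.tendsto_nhds.1 (hf z hz) (ε/4) (by positivity)] with n hn w hw
    obtain ⟨hw, hwΩ⟩ := hw
    have h1 : ∀ m, dist (F m w) (F m z) ≤ ε/4 := by
      intro m
      rw [← hG w hwΩ, ← hG z hz]
      exact (BoundedContinuousFunction.dist_coe_le_dist m).trans (le_of_lt hw)
    have h2 : dist (f w) (f z) ≤ ε/4 :=
      le_of_tendsto ((hf w hwΩ).dist (hf z hz)) (Eventually.of_forall h1)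
    have h3 := dist_triangle4 (f w) (f z) (F n z) (F n w)
    have h4 := h1 n
    rw [dist_comm] at hn h4
    linarith
  refine ⟨f, ?_, ?_⟩
  · intro z hz
    exact (hlu.differentiableOn (Eventually.of_forall fun n w hw =>
      (hol n w hw).differentiableWithinAt) hΩ).differentiableAt (hΩ.mem_nhds hz)
  · intro K hK hKc
    exact (tendstoLocallyUniformlyOn_iff_forall_isCompact hΩ).1 hlu K hK hKc
end
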